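/- arXiv:math/9406204 — 6 statements merged into one kernel-verified Lean document; each statement's English description precedes it below -/
import Mathlib

section
/- Let G be a group, let u, v, w be elements of G, and let S be a set of elements of G. Then the normal closure of S ∪ {u * v, w * v} equals the normal closure of S ∪ {u * v, w * u⁻¹}. That is, if one relator has the form u * v and another has the form w * v, the second may be replaced by w * u⁻¹ (substituting the equivalent string u⁻¹ for the common substring v) without changing the group presented. -/
theorem Subgroup.mul_mem_iff_mul_inv_mem {G : Type*} [Group G] (N : Subgroup G) {u v : G}
    (w : G) (huv : u * v ∈ N) : w * v ∈ N ↔ w * u⁻¹ ∈ N := by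
  have h : w * v = w * u⁻¹ * (u * v) := by group
  rw [h, N.mul_mem_cancel_right huv]

theorem normalClosure_substring_replacement {G : Type*} [Group G] (u v w : G) (S : Set G) :
    Subgroup.normalClosure (S ∪ {u * v, w * v}) =
      Subgroup.normalClosure (S ∪ {u * v, w * u⁻¹}) := by
  have subset_iff (N : Subgroup G) :
      S ∪ {u * v, w * v} ⊆ (N : Set G) ↔ S ∪ {u * v, w * u⁻¹} ⊆ (N : Set G) := by
    simp only [Set.union_subset_iff, Set.insert_subset_iff, Set.singleton_subset_iff,
      SetLike.mem_coe]
    exact and_congr_right fun _ => and_congr_right (N.mul_mem_iff_mul_inv_mem w)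
  apply le_antisymm <;> apply Subgroup.normalClosure_le_normal
  · exact (subset_iff _).2 Subgroup.subset_normalClosure
  · exact (subset_iff _).1 Subgroup.subset_normalClosure
end

section
/- Let m be a positive natural number and define the hash h : ℤ × ℤ → ℕ by h(a, b) = (a - b).natAbs % m. Let L be a list of integers and let L' = (L.map (fun x => -x)).reverse be its formal inverse. Then the multiset of hash values of the cyclic adjacent pairs of L equals the multiset of hash values of the cyclic adjacent pairs of L': Multiset.map h (L.zip (L.rotate 1)) = Multiset.map h (L'.zip (L'.rotate 1)). In particular h itself satisfies h(-b, -a) = h(a, b) for all integers a, b. -/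
theorem List.rotate_one_reverse_rotate_one {α : Type*} (l : List α) :
    (l.rotate 1).reverse.rotate 1 = l.reverse := by
  cases l <;> simp

/-- Reversing a list swaps the components of its cyclic adjacent pairs. -/
theorem List.zip_reverse_rotate_one_perm {α : Type*} (l : List α) :
    (l.reverse.zip (l.reverse.rotate 1)).Perm ((l.zip (l.rotate 1)).map Prod.swap) := by
  obtain ⟨k, hk⟩ : ∃ k, l.reverse.rotate 1 = k.reverse :=
    ⟨(l.reverse.rotate 1).reverse, by simp⟩
  have hkl : k.rotate 1 = l := by
    have h := List.rotate_one_reverse_rotate_one l.reverse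
    rwa [hk, List.reverse_reverse, List.reverse_reverse] at h
  have hlen : l.length = k.length := by rw [← hkl, List.length_rotate]
  have hrot : (l.zip k).rotate 1 = (l.rotate 1).zip l := by
    simpa only [List.zip, hkl] using List.zipWith_rotate_distrib Prod.mk l k 1 hlen
  rw [hk, List.zip_swap, ← hrot, List.zip, ← List.reverse_zipWith hlen]
  exact (List.reverse_perm _).trans (List.rotate_perm _ 1).symm

theorem hash_inversion_invariant (m : ℕ) (hm : 0 < m) (L : List ℤ) :
    (Multiset.map (fun p : ℤ × ℤ => (p.1 - p.2).natAbs % m) ↑(L.zip (L.rotate 1)) =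
      Multiset.map (fun p : ℤ × ℤ => (p.1 - p.2).natAbs % m)
        ↑(((L.map fun x => -x).reverse).zip (((L.map fun x => -x).reverse).rotate 1))) ∧
    ∀ a b : ℤ, ((-b) - (-a)).natAbs % m = (a - b).natAbs % m := by
  have hash_neg (a b : ℤ) : ((-b) - (-a)).natAbs % m = (a - b).natAbs % m := by
    rw [neg_sub_neg]
  refine ⟨?_, hash_neg⟩
  rw [Multiset.coe_eq_coe.mpr (List.zip_reverse_rotate_one_perm _), ← List.map_rotate,
    List.zip_map]
  simp only [Multiset.map_coe, List.map_map]
  congr 2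
  funext p
  exact (hash_neg p.1 p.2).symm
end

section
/- The Fibonacci group F(2,9), presented with nine generators x₁, ..., x₉ and the nine relators xᵢ xᵢ₊₁ xᵢ₊₂⁻¹ (indices taken cyclically modulo 9), is isomorphic to the group presented with two generators a, b and the two relators b·a·b·a·b²·a·b²·a⁻¹·b·a⁻²·b·a⁻² and a·b²·a·b²·a·b·a·b²·a·b·a²·b⁻¹·a·b⁻¹. -/
/-- Relators of the Fibonacci group F(2,9) on nine generators:
    xᵢ xᵢ₊₁ xᵢ₊₂⁻¹ with indices cyclic modulo 9. -/
def fibNineRels : Set (FreeGroup (Fin 9)) :=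
  Set.range fun i : Fin 9 =>
    FreeGroup.of i * FreeGroup.of (i + 1) * (FreeGroup.of (i + 2))⁻¹

/-- Relators of the two-generator presentation of F(2,9), with a = of 0, b = of 1. -/
def fibTwoRels : Set (FreeGroup (Fin 2)) :=
  let a : FreeGroup (Fin 2) := FreeGroup.of 0
  let b : FreeGroup (Fin 2) := FreeGroup.of 1
  {b * a * b * a * b ^ 2 * a * b ^ 2 * a⁻¹ * b * (a ^ 2)⁻¹ * b * (a ^ 2)⁻¹,
   a * b ^ 2 * a * b ^ 2 * a * b * a * b ^ 2 * a * b * a ^ 2 * b⁻¹ * a * b⁻¹}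

/-- The words in `a`, `b` representing the nine Fibonacci generators. -/
def fibWord {G : Type*} [Group G] (a b : G) : Fin 9 → G :=
  ![a, b, a * b, b * a * b, a * b ^ 2 * a * b, b * a * b * a * b ^ 2 * a * b,
    a * b ^ 2 * a * b ^ 2 * a * b * a * b ^ 2 * a * b, a ^ 2 * b⁻¹, b * a⁻¹]

/-- If `a` and `b` satisfy the two relators, the words `fibWord a b` satisfy the cyclic Fibonacci
recursion. -/
theorem fibWord_mul_eq {G : Type*} [Group G] {a b : G}
    (h₁ : b * a * b * a * b ^ 2 * a * b ^ 2 * a⁻¹ * b * (a ^ 2)⁻¹ * b * (a ^ 2)⁻¹ = 1)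
    (h₂ : a * b ^ 2 * a * b ^ 2 * a * b * a * b ^ 2 * a * b * a ^ 2 * b⁻¹ * a * b⁻¹ = 1)
    (i : Fin 9) : fibWord a b i * fibWord a b (i + 1) = fibWord a b (i + 2) := by
  have e₁ : b * a * b * a * b ^ 2 * a * b = a ^ 2 * b⁻¹ * a ^ 2 * b⁻¹ * a * b⁻¹ := by
    rw [← mul_inv_eq_one, ← h₁]
    simp [pow_two, mul_assoc]
  have e₂ : a * b ^ 2 * a * b ^ 2 * a * b * a * b ^ 2 * a * b = b * a⁻¹ * b * (a ^ 2)⁻¹ := by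
    rw [← mul_inv_eq_one, ← h₂]
    group
  fin_cases i
  · rfl
  · simp [fibWord, mul_assoc]
  · simp [fibWord, mul_assoc, pow_two]
  · simp [fibWord, mul_assoc, pow_two]
  · simp [fibWord, mul_assoc, pow_two]
  · change b * a * b * a * b ^ 2 * a * b * (a * b ^ 2 * a * b ^ 2 * a * b * a * b ^ 2 * a * b) =
      a ^ 2 * b⁻¹
    rw [e₁, e₂]
    group
  · change a * b ^ 2 * a * b ^ 2 * a * b * a * b ^ 2 * a * b * (a ^ 2 * b⁻¹) = b * a⁻¹
    rw [e₂]
    group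
  · change a ^ 2 * b⁻¹ * (b * a⁻¹) = a
    group
  · change b * a⁻¹ * a = b
    group

/-- A cyclic Fibonacci sequence of period nine is determined by its first two terms. -/
theorem eq_fibWord {G : Type*} [Group G] {x : Fin 9 → G}
    (hx : ∀ i, x i * x (i + 1) = x (i + 2)) : x = fibWord (x 0) (x 1) := by
  have h2 : x 2 = x 0 * x 1 := (hx 0).symm
  have h3 : x 3 = x 1 * x 2 := (hx 1).symm
  have h4 : x 4 = x 2 * x 3 := (hx 2).symm
  have h5 : x 5 = x 3 * x 4 := (hx 3).symm
  have h6 : x 6 = x 4 * x 5 := (hx 4).symm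
  have h8 : x 8 = x 1 * (x 0)⁻¹ := eq_mul_inv_of_mul_eq (hx 8)
  have h7 : x 7 = x 0 * (x 8)⁻¹ := eq_mul_inv_of_mul_eq (hx 7)
  funext i
  fin_cases i <;> simp [fibWord, h2, h3, h4, h5, h6, h7, h8, mul_assoc, pow_two]

/-- The first two terms of a cyclic Fibonacci sequence of period nine satisfy the two relators. -/
theorem fibTwo_relators_eq_one {G : Type*} [Group G] {x : Fin 9 → G}
    (hx : ∀ i, x i * x (i + 1) = x (i + 2)) {a b : G} (ha : x 0 = a) (hb : x 1 = b) :
    b * a * b * a * b ^ 2 * a * b ^ 2 * a⁻¹ * b * (a ^ 2)⁻¹ * b * (a ^ 2)⁻¹ = 1 ∧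
      a * b ^ 2 * a * b ^ 2 * a * b * a * b ^ 2 * a * b * a ^ 2 * b⁻¹ * a * b⁻¹ = 1 := by
  have key := eq_fibWord hx
  rw [ha, hb] at key
  subst key
  have e₂ : a * b ^ 2 * a * b ^ 2 * a * b * a * b ^ 2 * a * b = b * a⁻¹ * (a ^ 2 * b⁻¹)⁻¹ :=
    eq_mul_inv_of_mul_eq (hx 6)
  have e₁ : b * a * b * a * b ^ 2 * a * b =
      a ^ 2 * b⁻¹ * (a * b ^ 2 * a * b ^ 2 * a * b * a * b ^ 2 * a * b)⁻¹ :=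
    eq_mul_inv_of_mul_eq (hx 5)
  rw [e₂] at e₁
  rw [← mul_inv_eq_one] at e₁ e₂
  constructor
  · rw [← e₁]
    simp [pow_two, mul_assoc]
  · rw [← e₂]
    group

theorem fib_nine_iso_two :
    Nonempty (PresentedGroup fibNineRels ≃* PresentedGroup fibTwoRels) := by
  let x : Fin 9 → PresentedGroup fibNineRels := PresentedGroup.of
  have hx : ∀ i, x i * x (i + 1) = x (i + 2) := fun i =>
    mul_inv_eq_one.mp (PresentedGroup.one_of_mem (Set.mem_range_self i : _ ∈ fibNineRels))
  have hw := fibWord_mul_eq (a := (PresentedGroup.of 0 : PresentedGroup fibTwoRels))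
    (b := PresentedGroup.of 1)
    (PresentedGroup.one_of_mem (Set.mem_insert _ _ : _ ∈ fibTwoRels))
    (PresentedGroup.one_of_mem (Set.mem_insert_of_mem _ rfl : _ ∈ fibTwoRels))
  have hf : ∀ r ∈ fibNineRels, FreeGroup.lift
      (fibWord (PresentedGroup.of 0 : PresentedGroup fibTwoRels) (PresentedGroup.of 1)) r = 1 := by
    rintro _ ⟨i, rfl⟩
    simpa [mul_inv_eq_one] using hw i
  have hg : ∀ r ∈ fibTwoRels, FreeGroup.lift ![x 0, x 1] r = 1 := by
    obtain ⟨h₁, h₂⟩ := fibTwo_relators_eq_one hx rfl rfl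
    rintro _ (rfl | rfl)
    · simpa using h₁
    · simpa using h₂
  refine ⟨MonoidHom.toMulEquiv (PresentedGroup.toGroup hf) (PresentedGroup.toGroup hg) ?_ ?_⟩
  · ext i
    refine Eq.trans ?_ (congrFun (eq_fibWord hx) i).symm
    fin_cases i <;> simp [fibWord]
  · ext i
    fin_cases i <;> simp [fibWord, x]
end

section
/- The Fibonacci group F(2,9), presented with nine generators x₁, ..., x₉ and the nine relators xᵢ xᵢ₊₁ xᵢ₊₂⁻¹ (indices taken cyclically modulo 9), is isomorphic to the group presented with six generators a, b, d, e, g, h and the six relators b·a·b·d⁻¹, a·b·d·e⁻¹, e·d·e·g⁻¹, d·e·g·h⁻¹, h·g·h·a⁻¹, and g·h·a·b⁻¹. -/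
/-- Relators of the six-generator presentation of F(2,9), with generators
    a, b, d, e, g, h indexed by 0, 1, 2, 3, 4, 5. -/
def fibSixRels : Set (FreeGroup (Fin 6)) :=
  let a : FreeGroup (Fin 6) := FreeGroup.of 0
  let b : FreeGroup (Fin 6) := FreeGroup.of 1
  let d : FreeGroup (Fin 6) := FreeGroup.of 2
  let e : FreeGroup (Fin 6) := FreeGroup.of 3
  let g : FreeGroup (Fin 6) := FreeGroup.of 4
  let h : FreeGroup (Fin 6) := FreeGroup.of 5
  {b * a * b * d⁻¹, a * b * d * e⁻¹, e * d * e * g⁻¹,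
   d * e * g * h⁻¹, h * g * h * a⁻¹, g * h * a * b⁻¹}

/-- The Fibonacci relations `xᵢ xᵢ₊₁ = xᵢ₊₂` hold in the nine-generator group. -/
lemma fibNine_of_mul_of (i : Fin 9) :
    (PresentedGroup.of i * PresentedGroup.of (i + 1) : PresentedGroup fibNineRels) =
      PresentedGroup.of (i + 2) :=
  PresentedGroup.mk_eq_mk_of_mul_inv_mem ⟨i, rfl⟩

/-- The defining relations of the six-generator group. -/
lemma fibSix_relations :
    let x : Fin 6 → PresentedGroup fibSixRels := PresentedGroup.of
    x 1 * x 0 * x 1 = x 2 ∧ x 0 * x 1 * x 2 = x 3 ∧ x 3 * x 2 * x 3 = x 4 ∧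
      x 2 * x 3 * x 4 = x 5 ∧ x 5 * x 4 * x 5 = x 0 ∧ x 4 * x 5 * x 0 = x 1 := by
  refine ⟨?_, ?_, ?_, ?_, ?_, ?_⟩ <;>
    exact PresentedGroup.mk_eq_mk_of_mul_inv_mem (by simp [fibSixRels])

/-- Images of the nine Fibonacci generators in the six-generator group. -/
def fibNineImage : Fin 9 → PresentedGroup fibSixRels :=
  let x : Fin 6 → PresentedGroup fibSixRels := PresentedGroup.of
  ![x 0, x 1, x 0 * x 1, x 2, x 3, x 2 * x 3, x 4, x 5, x 4 * x 5]

/-- Images of the six generators in the nine-generator group. -/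
def fibSixImage : Fin 6 → PresentedGroup fibNineRels :=
  PresentedGroup.of ∘ ![0, 1, 3, 4, 6, 7]

lemma lift_fibNineImage_eq_one :
    ∀ r ∈ fibNineRels, FreeGroup.lift fibNineImage r = 1 := by
  rintro _ ⟨i, rfl⟩
  obtain ⟨hd, he, hg, hh, ha, hb⟩ := fibSix_relations
  simp only [map_mul, map_inv, FreeGroup.lift_apply_of, mul_inv_eq_one]
  fin_cases i
  · rfl
  · exact (mul_assoc _ _ _).symm.trans hd
  · exact he
  · rfl
  · exact (mul_assoc _ _ _).symm.trans hg
  · exact hh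
  · rfl
  · exact (mul_assoc _ _ _).symm.trans ha
  · exact hb

lemma lift_fibSixImage_eq_one :
    ∀ r ∈ fibSixRels, FreeGroup.lift fibSixImage r = 1 := by
  have hc := fibNine_of_mul_of 0
  have hd := fibNine_of_mul_of 1
  have he := fibNine_of_mul_of 2
  have hf := fibNine_of_mul_of 3
  have hg := fibNine_of_mul_of 4
  have hh := fibNine_of_mul_of 5
  have hi := fibNine_of_mul_of 6
  have ha := fibNine_of_mul_of 7
  have hb := fibNine_of_mul_of 8
  rintro r (rfl | rfl | rfl | rfl | rfl | rfl) <;>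
    simp only [map_mul, map_inv, FreeGroup.lift_apply_of, mul_inv_eq_one]
  · exact (mul_assoc _ _ _).trans ((congrArg _ hc).trans hd)
  · exact (congrArg (· * _) hc).trans he
  · exact (mul_assoc _ _ _).trans ((congrArg _ hf).trans hg)
  · exact (congrArg (· * _) hf).trans hh
  · exact (mul_assoc _ _ _).trans ((congrArg _ hi).trans ha)
  · exact (congrArg (· * _) hi).trans hb

theorem fib_nine_iso_six :
    Nonempty (PresentedGroup fibNineRels ≃* PresentedGroup fibSixRels) := by
  refine ⟨MonoidHom.toMulEquiv (PresentedGroup.toGroup lift_fibNineImage_eq_one)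
    (PresentedGroup.toGroup lift_fibSixImage_eq_one) ?_ ?_⟩
  · refine PresentedGroup.ext fun i => ?_
    rw [MonoidHom.comp_apply, PresentedGroup.toGroup.of, MonoidHom.id_apply]
    fin_cases i <;>
      simp [fibNineImage, fibSixImage, PresentedGroup.toGroup.of]
    · exact fibNine_of_mul_of 0
    · exact fibNine_of_mul_of 3
    · exact fibNine_of_mul_of 6
  · refine PresentedGroup.ext fun i => ?_
    rw [MonoidHom.comp_apply, PresentedGroup.toGroup.of, MonoidHom.id_apply]
    fin_cases i <;> exact PresentedGroup.toGroup.of lift_fibNineImage_eq_one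
end

section
/- In the Janko simple group J₂ given by the presentation with generators a, b, c and relators a³, b³, c³, a·b·a·(b·a·b)⁻¹, (c·a)⁵, (c·b)⁵, (c·b⁻¹·c·b)², a⁻¹·b·a·c·a⁻¹·b·a·(b·a·c)⁻¹·a·c⁻¹, and a·b·a⁻¹·c·a·b·(c·a)⁻¹·a·b⁻¹·(c·a)⁻¹, the subgroup generated by a, b, and (c·a⁻¹·c)⁻¹·b·(c·a⁻¹·c) has index 100. -/
/-- Relators of the given presentation of the Janko simple group J₂,
    with generators a, b, c indexed by 0, 1, 2. -/
def jankoRels : Set (FreeGroup (Fin 3)) :=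
  let a : FreeGroup (Fin 3) := FreeGroup.of 0
  let b : FreeGroup (Fin 3) := FreeGroup.of 1
  let c : FreeGroup (Fin 3) := FreeGroup.of 2
  {a ^ 3, b ^ 3, c ^ 3, a * b * a * (b * a * b)⁻¹, (c * a) ^ 5, (c * b) ^ 5,
   (c * b⁻¹ * c * b) ^ 2,
   a⁻¹ * b * a * c * a⁻¹ * b * a * (b * a * c)⁻¹ * a * c⁻¹,
   a * b * a⁻¹ * c * a * b * (c * a)⁻¹ * a * b⁻¹ * (c * a)⁻¹}

/-! ### A verified coset enumeration

The upper bound on the index is obtained by a Todd–Coxeter enumeration carried out by the kernel.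
Cosets are named by natural numbers. The letters `0, 1, 2` stand for the three generators,
`3, 4, 5` for their inverses, and `6` is the trivial letter, whose edges record that two names
denote the same coset. -/

namespace CosetEnumeration

/-- Partial maps from `ℕ` to `ℕ`, stored as binary tries: key `0` sits at the root, key `2 * k + 1`
in the left subtree and key `2 * k + 2` in the right subtree. -/
inductive Trie where
  | nil : Trie
  | node (val : Option ℕ) (left right : Trie) : Trie

namespace Trie

/-- The value at the root. -/
def val : Trie → Option ℕ
  | nil => none
  | node v _ _ => v

/-- The left subtree. -/
def left : Trie → Trie
  | nil => nil
  | node _ l _ => l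

/-- The right subtree. -/
def right : Trie → Trie
  | nil => nil
  | node _ _ r => r

/-- The value stored at a key. -/
def get : Trie → ℕ → Option ℕ
  | nil, _ => none
  | node v _ _, 0 => v
  | node _ l r, k + 1 => match k % 2 with
    | 0 => l.get (k / 2)
    | _ + 1 => r.get (k / 2)

/-- Store `y` at a key, unless the key lies deeper than the first argument. -/
def insert : ℕ → ℕ → ℕ → Trie → Trie
  | 0, _, _, t => t
  | _ + 1, 0, y, t => node (some y) t.left t.right
  | n + 1, k + 1, y, t => match k % 2 with
    | 0 => node t.val (insert n (k / 2) y t.left) t.right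
    | _ + 1 => node t.val t.left (insert n (k / 2) y t.right)

theorem get_zero (t : Trie) : t.get 0 = t.val := by
  cases t <;> rfl

theorem get_succ (t : Trie) (k : ℕ) :
    t.get (k + 1) = if k % 2 = 0 then t.left.get (k / 2) else t.right.get (k / 2) := by
  cases t with
  | nil => simp [get, left, right]
  | node v l r => rcases Nat.mod_two_eq_zero_or_one k with h | h <;> simp [get, left, right, h]

theorem eq_or_get_of_get_insert {n k k' y y' : ℕ} {t : Trie}
    (h : (insert n k y t).get k' = some y') : k' = k ∧ y' = y ∨ t.get k' = some y' := by
  induction n generalizing k k' t with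
  | zero => exact Or.inr h
  | succ n ih =>
    cases k with
    | zero =>
      cases k' with
      | zero => exact Or.inl ⟨rfl, by simpa [insert, get, eq_comm] using h⟩
      | succ k' =>
        rw [insert, get_succ] at h
        exact Or.inr (by rw [get_succ]; exact h)
    | succ k =>
      cases k' with
      | zero =>
        right
        rw [get_zero] at h ⊢
        rw [insert] at h
        split at h <;> exact h
      | succ k' =>
        rw [get_succ] at h ⊢
        rw [insert] at h
        rcases Nat.mod_two_eq_zero_or_one k with hk | hk <;>
          rcases Nat.mod_two_eq_zero_or_one k' with hk' | hk' <;>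
          simp only [hk, hk', left, right, if_true, one_ne_zero, if_false] at h ⊢
        · exact (ih h).imp_left fun h' => ⟨by omega, h'.2⟩
        · exact Or.inr h
        · exact Or.inr h
        · exact (ih h).imp_left fun h' => ⟨by omega, h'.2⟩

end Trie

/-- The inverse of a letter. -/
def invLetter : Fin 8 → Fin 8 := ![3, 4, 5, 0, 1, 2, 6, 7]

/-- The inverse of a word. -/
def invWord (w : List (Fin 8)) : List (Fin 8) := (w.map invLetter).reverse

/-- The target of the edge labelled `g` out of `x`. -/
def edge (t : Trie) (x : ℕ) (g : Fin 8) : Option ℕ := t.get (8 * x + g)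

/-- Add the edge labelled `g` from `x` to `y`. -/
def addEdge (t : Trie) (x : ℕ) (g : Fin 8) (y : ℕ) : Trie := t.insert 16 (8 * x + g) y

/-- Add the edge labelled `g` from `x` to `y` together with its inverse. -/
def link (t : Trie) (x : ℕ) (g : Fin 8) (y : ℕ) : Trie :=
  addEdge (addEdge t x g y) y (invLetter g) x

/-- Follow at most `n` trivial edges from `x`. -/
def find (t : Trie) : ℕ → ℕ → ℕ
  | 0, x => x
  | n + 1, x => match edge t x 6 with
    | none => x
    | some y => find t n y

/-- The current name of the coset named `x`. -/
abbrev root (t : Trie) (x : ℕ) : ℕ := find t 32 x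

/-- Read a word from `x` for as long as edges are known; return the coset reached and the part of
the word that is left. -/
def trace (t : Trie) : ℕ → List (Fin 8) → ℕ × List (Fin 8)
  | x, [] => (x, [])
  | x, g :: w => match edge t x g with
    | none => (x, g :: w)
    | some y => trace t (root t y) w

/-- Copy to `a` the edges out of `b` labelled by the given letters. Return the new table and the
pairs of names which have to be identified as a consequence. -/
def mergeRows (a b : ℕ) : List (Fin 8) → Trie → List (ℕ × ℕ) → Trie × List (ℕ × ℕ)
  | [], t, q => (t, q)
  | g :: gs, t, q => match edge t b g with
    | none => mergeRows a b gs t q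
    | some d => match edge t a g with
      | none => mergeRows a b gs (addEdge t a g d) q
      | some e => mergeRows a b gs t ((d, e) :: q)

/-- Process a queue of pairs of names that denote the same coset. -/
def coincide : ℕ → Trie → List (ℕ × ℕ) → Trie
  | 0, t, _ => t
  | _ + 1, t, [] => t
  | n + 1, t, (x, y) :: q =>
    let a := min (root t x) (root t y)
    let b := max (root t x) (root t y)
    match a == b with
    | true => coincide n t q
    | false =>
      let s := mergeRows a b [0, 1, 2, 3, 4, 5] (addEdge t b 6 a) q
      coincide n s.1 s.2

/-- Draw the consequence of the fact that `w` fixes the coset named `x`. -/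
def scan (t : Trie) (x : ℕ) (w : List (Fin 8)) : Trie :=
  let s := trace t (root t x) w
  let u := trace t (root t x) (invWord s.2)
  match u.2 with
  | [] => coincide 256 t [(u.1, s.1)]
  | [g] => link t u.1 g s.1
  | _ => t

/-- Enter the definitions of cosets: the entry `(i, g)` defines the next coset as the image of the
coset named `i` under `g`. -/
def define : ℕ → List (ℕ × Fin 8) → Trie → Trie
  | _, [], t => t
  | j, (i, g) :: l, t => match i.ble j with
    | true => define (j + 1) l (link t i g (j + 1))
    | false => define (j + 1) l t

/-- Carry out a list of scans. -/
def scanAll (rels gens : List (List (Fin 8))) : List (ℕ × ℕ) → Trie → Trie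
  | [], t => t
  | (x, k) :: l, t => match x with
    | 0 => scanAll rels gens l (scan t 0 ((rels ++ gens).getD k []))
    | x + 1 => scanAll rels gens l (scan t (x + 1) (rels.getD k []))

/-- The names among the first `n` which are their own roots. -/
def roots (t : Trie) (n : ℕ) : List ℕ := (List.range n).filter fun x => (edge t x 6).isNone

/-- Every coset named in `l` has its images under the six nontrivial letters named in `l`. -/
def closed (t : Trie) (l : List ℕ) : Bool :=
  l.all fun x => [0, 1, 2, 3, 4, 5].all fun g =>
    match edge t x g with
    | none => false
    | some y => l.contains (root t y)

section Soundness

variable {X : Type*} (act : Fin 8 → Equiv.Perm X) (v : ℕ → X)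

/-- The image of a point under a word, read from left to right. -/
def actWord (w : List (Fin 8)) (x : X) : X := w.foldl (fun x g => act g x) x

/-- All edges of the table are true when `x` is interpreted as the point `v x`. -/
def Valid (t : Trie) : Prop := ∀ x g y, edge t x g = some y → act g (v x) = v y

variable {act v}

theorem actWord_invWord (hinv : ∀ g, act (invLetter g) = (act g)⁻¹) (w : List (Fin 8)) (x : X) :
    actWord act (invWord w) (actWord act w x) = x := by
  induction w generalizing x with
  | nil => rfl
  | cons g w ih =>
    have h := ih (act g x)
    simp only [actWord, invWord, List.map_cons, List.reverse_cons, List.foldl_append,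
      List.foldl_cons, List.foldl_nil] at h ⊢
    rw [h, hinv, Equiv.Perm.inv_def, Equiv.symm_apply_apply]

theorem Valid.addEdge {t : Trie} (ht : Valid act v t) {x y : ℕ} {g : Fin 8}
    (h : act g (v x) = v y) : Valid act v (addEdge t x g y) := by
  intro x' g' y' h'
  rcases Trie.eq_or_get_of_get_insert h' with ⟨hk, rfl⟩ | h'
  · obtain rfl : x' = x := by omega
    obtain rfl : g' = g := by omega
    exact h
  · exact ht _ _ _ h'

theorem Valid.link (hinv : ∀ g, act (invLetter g) = (act g)⁻¹) {t : Trie} (ht : Valid act v t)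
    {x y : ℕ} {g : Fin 8} (h : act g (v x) = v y) : Valid act v (link t x g y) := by
  refine (ht.addEdge h).addEdge ?_
  rw [hinv, ← h, Equiv.Perm.inv_def, Equiv.symm_apply_apply]

theorem Valid.find (h6 : act 6 = 1) {t : Trie} (ht : Valid act v t) (n x : ℕ) :
    v (find t n x) = v x := by
  induction n generalizing x with
  | zero => rfl
  | succ n ih =>
    rw [CosetEnumeration.find]
    split
    · rfl
    · next y h => rw [ih, ← ht _ _ _ h, h6, Equiv.Perm.one_apply]

theorem Valid.trace (h6 : act 6 = 1) {t : Trie} (ht : Valid act v t) (x : ℕ) (w : List (Fin 8)) :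
    actWord act (trace t x w).2 (v (trace t x w).1) = actWord act w (v x) := by
  induction w generalizing x with
  | nil => rfl
  | cons g w ih =>
    rw [CosetEnumeration.trace]
    split
    · rfl
    · next y h =>
      rw [ih, ht.find h6, ← ht _ _ _ h]
      rfl

theorem Valid.mergeRows {a b : ℕ} (hab : v a = v b) (gs : List (Fin 8)) {t : Trie}
    (ht : Valid act v t) {q : List (ℕ × ℕ)} (hq : ∀ p ∈ q, v p.1 = v p.2) :
    Valid act v (mergeRows a b gs t q).1 ∧ ∀ p ∈ (mergeRows a b gs t q).2, v p.1 = v p.2 := by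
  induction gs generalizing t q with
  | nil => exact ⟨ht, hq⟩
  | cons g gs ih =>
    rw [CosetEnumeration.mergeRows]
    split
    · exact ih ht hq
    · next d hd =>
      split
      · exact ih (ht.addEdge (by rw [hab, ht _ _ _ hd])) hq
      · next e he =>
        refine ih ht fun p hp => ?_
        rcases List.mem_cons.1 hp with rfl | hp
        · rw [← ht _ _ _ hd, ← ht _ _ _ he, hab]
        · exact hq p hp

theorem Valid.coincide (h6 : act 6 = 1) (n : ℕ) {t : Trie} (ht : Valid act v t)
    {q : List (ℕ × ℕ)} (hq : ∀ p ∈ q, v p.1 = v p.2) : Valid act v (coincide n t q) := by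
  induction n generalizing t q with
  | zero => exact ht
  | succ n ih =>
    match q, hq with
    | [], _ => exact ht
    | (x, y) :: q, hq =>
      have hq' : ∀ p ∈ q, v p.1 = v p.2 := fun p hp => hq p (List.mem_cons_of_mem _ hp)
      have hxy : v (root t x) = v (root t y) := by
        rw [ht.find h6, ht.find h6]
        exact hq (x, y) List.mem_cons_self
      have hab : v (min (root t x) (root t y)) = v (max (root t x) (root t y)) := by
        rcases le_total (root t x) (root t y) with h | h <;> simp only [h, inf_of_le_left,
          inf_of_le_right, sup_of_le_left, sup_of_le_right, hxy]
      rw [CosetEnumeration.coincide]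
      dsimp only
      split
      · exact ih ht hq'
      · have h := Valid.mergeRows hab [0, 1, 2, 3, 4, 5]
          (ht.addEdge (x := max (root t x) (root t y)) (g := 6)
            (by rw [h6, Equiv.Perm.one_apply, hab])) hq'
        exact ih h.1 h.2

theorem Valid.scan (hinv : ∀ g, act (invLetter g) = (act g)⁻¹) (h6 : act 6 = 1) {t : Trie}
    (ht : Valid act v t) {x : ℕ} {w : List (Fin 8)} (hw : actWord act w (v x) = v x) :
    Valid act v (scan t x w) := by
  have hs := ht.trace h6 (root t x) w
  rw [ht.find h6, hw] at hs
  have hu := ht.trace h6 (root t x) (invWord (CosetEnumeration.trace t (root t x) w).2)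
  rw [ht.find h6, ← hs, actWord_invWord hinv] at hu
  rw [CosetEnumeration.scan]
  split
  · next h =>
    rw [h] at hu
    refine ht.coincide h6 _ fun p hp => ?_
    obtain rfl := List.mem_singleton.1 hp
    exact hu
  · next g h =>
    rw [h] at hu
    exact ht.link hinv hu
  · exact ht

theorem Valid.scanAll (hinv : ∀ g, act (invLetter g) = (act g)⁻¹) (h6 : act 6 = 1)
    {rels gens : List (List (Fin 8))} (hrels : ∀ w ∈ rels, ∀ x, actWord act w x = x)
    (hgens : ∀ w ∈ gens, actWord act w (v 0) = v 0) (l : List (ℕ × ℕ)) {t : Trie}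
    (ht : Valid act v t) : Valid act v (scanAll rels gens l t) := by
  have key : ∀ (L : List (List (Fin 8))) (x : X) (k : ℕ), (∀ w ∈ L, actWord act w x = x) →
      actWord act (L.getD k []) x = x := by
    intro L x k h
    rcases lt_or_ge k L.length with hk | hk
    · rw [List.getD_eq_getElem _ _ hk]
      exact h _ (List.getElem_mem hk)
    · rw [List.getD_eq_default _ _ hk]
      rfl
  induction l generalizing t with
  | nil => exact ht
  | cons p l ih =>
    obtain ⟨_ | x, k⟩ := p
    · refine ih (ht.scan hinv h6 (key _ _ _ fun w hw => ?_))
      exact (List.mem_append.1 hw).elim (fun hw => hrels w hw _) (hgens w)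
    · exact ih (ht.scan hinv h6 (key _ _ _ fun w hw => hrels w hw _))

variable (act) in
/-- The points named by a list of definitions. -/
def point (x₀ : X) (l : List (ℕ × Fin 8)) : ℕ → X
  | 0 => x₀
  | j + 1 =>
    if _h : (l.getD j (0, 6)).1 ≤ j then
      act (l.getD j (0, 6)).2 (point x₀ l (l.getD j (0, 6)).1)
    else x₀

theorem Valid.define (hinv : ∀ g, act (invLetter g) = (act g)⁻¹) {x₀ : X}
    (l₁ l₂ : List (ℕ × Fin 8)) {t : Trie} (ht : Valid act (point act x₀ (l₁ ++ l₂)) t) :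
    Valid act (point act x₀ (l₁ ++ l₂)) (define l₁.length l₂ t) := by
  induction l₂ generalizing l₁ t with
  | nil => exact ht
  | cons p l₂ ih =>
    have ih_append := fun {t} => @ih (l₁ ++ [p]) t
    simp only [List.append_assoc, List.cons_append, List.nil_append, List.length_append,
      List.length_cons, List.length_nil, zero_add] at ih_append
    obtain ⟨i, g⟩ := p
    rw [CosetEnumeration.define]
    split
    · next hi =>
      refine ih_append (ht.link hinv ?_)
      conv_rhs => rw [point]
      have hp : (l₁ ++ (i, g) :: l₂).getD l₁.length (0, 6) = (i, g) := by simp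
      rw [hp, dif_pos (Nat.le_of_ble_eq_true hi)]
    · exact ih_append ht

/-- If the enumeration closes up, a transitive set has at most as many points as there are roots. -/
theorem finite_and_card_le (hinv : ∀ g, act (invLetter g) = (act g)⁻¹) (h6 : act 6 = 1) {x₀ : X}
    {rels gens : List (List (Fin 8))} (hrels : ∀ w ∈ rels, ∀ x, actWord act w x = x)
    (hgens : ∀ w ∈ gens, actWord act w x₀ = x₀)
    (htrans : ∀ S : Set X, x₀ ∈ S → (∀ x ∈ S, ∀ g ∈ [0, 1, 2, 3, 4, 5], act g x ∈ S) → S = .univ)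
    (defs : List (ℕ × Fin 8)) (scans : List (ℕ × ℕ)) {n N : ℕ}
    (hclosed : (fun t => (roots t n).contains 0 && closed t (roots t n) &&
      (roots t n).length.ble N) (scanAll rels gens scans (define 0 defs .nil)) = true) :
    Finite X ∧ Nat.card X ≤ N := by
  set t := scanAll rels gens scans (CosetEnumeration.define 0 defs .nil) with ht_def
  set v := point act x₀ defs with hv
  have hv0 : v 0 = x₀ := by rw [hv, point]
  have ht : Valid act v t := by
    refine Valid.scanAll hinv h6 hrels (by rwa [hv0]) _ ?_
    exact Valid.define hinv [] defs fun x g y h => by simp [edge, Trie.get] at h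
  simp only [Bool.and_eq_true, List.contains_iff_mem] at hclosed
  obtain ⟨⟨h0, hc⟩, hN⟩ := hclosed
  have huniv : v '' ((roots t n).toFinset : Set ℕ) = Set.univ := by
    refine htrans _ ⟨0, by simpa using h0, hv0⟩ ?_
    rintro _ ⟨x, hx, rfl⟩ g hg
    have h := List.all_eq_true.1 (List.all_eq_true.1 hc x (by simpa using hx)) g hg
    split at h
    · exact absurd h (by simp)
    · next y hy =>
      refine ⟨root t y, by simpa using h, ?_⟩
      rw [ht.find h6, ht _ _ _ hy]
  have hfin : (Set.univ : Set X).Finite := huniv ▸ (Finset.finite_toSet _).image v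
  refine ⟨Set.finite_univ_iff.1 hfin, ?_⟩
  calc Nat.card X = (v '' ((roots t n).toFinset : Set ℕ)).ncard := by rw [huniv, Set.ncard_univ]
    _ ≤ ((roots t n).toFinset : Set ℕ).ncard := Set.ncard_image_le (Finset.finite_toSet _)
    _ = (roots t n).toFinset.card := Set.ncard_coe_finset _
    _ ≤ (roots t n).length := List.toFinset_card_le _
    _ ≤ N := Nat.le_of_ble_eq_true hN

end Soundness

end CosetEnumeration

namespace Janko

/-- The relators as words. -/
def relatorWords : List (List (Fin 8)) :=
  [[0, 0, 0], [1, 1, 1], [2, 2, 2], [0, 1, 0, 4, 3, 4], [2, 0, 2, 0, 2, 0, 2, 0, 2, 0],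
   [2, 1, 2, 1, 2, 1, 2, 1, 2, 1], [2, 4, 2, 1, 2, 4, 2, 1], [3, 1, 0, 2, 3, 1, 0, 5, 3, 4, 0, 5],
   [0, 1, 3, 2, 0, 1, 3, 5, 0, 4, 3, 5]]

/-- The generators of the subgroup as words. -/
def subgroupWords : List (List (Fin 8)) :=
  [[0], [1], [5, 0, 5, 1, 2, 3, 2]]

/-- The definitions of the cosets used in the enumeration. -/
def cosetDefs : List (ℕ × Fin 8) :=
  [(0, 5), (1, 0), (2, 5), (1, 5), (1, 3), (2, 2), (4, 4), (4, 1), (1, 1), (1, 4), (9, 5), (7, 2),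
   (2, 1), (13, 1), (14, 3), (10, 3), (16, 3), (17, 1), (13, 0), (9, 0), (16, 4), (3, 0), (5, 4),
   (23, 0), (9, 3), (17, 4), (26, 3), (3, 3), (15, 3), (29, 4), (23, 4), (31, 0), (29, 1), (4, 0),
   (34, 4), (18, 2), (7, 3), (4, 3), (38, 4), (39, 0), (39, 3), (5, 2), (38, 1), (43, 0), (43, 3),
   (45, 4), (5, 5), (7, 5), (18, 5), (49, 0), (50, 0), (12, 4), (9, 2), (40, 2), (54, 3), (55, 3),
   (6, 4), (8, 2), (10, 5), (59, 4), (59, 5), (8, 5), (22, 1), (22, 4), (64, 3), (28, 4), (65, 3),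
   (11, 0), (68, 0), (54, 1), (70, 1), (71, 3), (56, 4), (71, 0), (12, 0), (12, 3), (14, 5),
   (13, 2), (57, 5), (78, 1), (78, 2), (75, 1), (68, 1), (82, 3), (52, 0), (16, 2), (85, 4),
   (69, 1), (68, 4), (76, 1), (89, 0), (91, 1), (16, 5), (93, 1), (94, 5), (95, 1), (94, 2),
   (97, 4), (93, 4), (98, 4), (77, 0), (46, 5), (102, 0), (17, 2), (81, 0), (73, 5), (106, 0),
   (105, 4), (108, 3), (17, 5), (108, 0), (111, 1), (47, 4), (94, 0), (65, 5), (21, 5), (21, 2),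
   (58, 0), (26, 2), (56, 5), (26, 5), (120, 0), (74, 5), (123, 4), (95, 0), (27, 5), (114, 0),
   (126, 1), (128, 1), (129, 2), (130, 0), (126, 3), (131, 0), (126, 0), (134, 1), (134, 4),
   (63, 2), (30, 2), (29, 5), (119, 1), (140, 0), (141, 0), (139, 0), (117, 4), (99, 2), (144, 3),
   (33, 5), (117, 3), (147, 4), (146, 3), (139, 4), (148, 5), (152, 0), (153, 0), (99, 5)]

/-- The scans of the enumeration: `(x, k)` applies word number `k` at the coset named `x`. -/
def cosetScans : List (ℕ × ℕ) :=
  [(0, 9), (0, 10), (0, 11), (0, 2), (1, 0), (2, 2), (4, 1), (1, 1), (0, 6), (2, 1), (15, 8),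
   (16, 3), (10, 0), (10, 3), (13, 0), (1, 3), (15, 1), (15, 3), (21, 0), (24, 7), (9, 0), (23, 3),
   (17, 1), (20, 3), (24, 1), (3, 0), (14, 0), (18, 3), (5, 1), (2, 3), (13, 3), (1, 8), (37, 3),
   (4, 0), (1, 7), (36, 3), (37, 1), (39, 0), (0, 7), (35, 3), (36, 0), (5, 2), (7, 2), (18, 2),
   (49, 0), (11, 1), (9, 2), (32, 2), (40, 7), (54, 0), (1, 6), (58, 1), (59, 5), (10, 2), (59, 6),
   (10, 6), (7, 6), (8, 2), (3, 3), (22, 1), (22, 3), (28, 1), (65, 3), (64, 0), (64, 3), (55, 3),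
   (54, 1), (54, 3), (56, 1), (72, 3), (70, 3), (12, 0), (6, 6), (78, 1), (79, 5), (13, 2), (77, 6),
   (12, 3), (82, 0), (11, 3), (84, 1), (68, 3), (68, 1), (75, 3), (89, 0), (83, 3), (87, 0),
   (16, 2), (15, 6), (86, 1), (94, 2), (93, 1), (97, 1), (77, 8), (81, 3), (102, 8), (102, 1),
   (90, 8), (17, 2), (108, 0), (102, 3), (106, 0), (90, 7), (83, 8), (88, 8), (110, 7), (2, 7),
   (5, 7), (6, 4), (9, 4), (9, 8), (11, 8), (17, 8), (18, 4), (93, 8), (5, 8), (96, 3), (5, 6),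
   (99, 3), (113, 0), (10, 7), (14, 7), (16, 4), (60, 0), (115, 8), (21, 2), (47, 0), (47, 4),
   (93, 3), (23, 5), (23, 6), (26, 2), (25, 7), (58, 3), (8, 8), (16, 7), (14, 8), (59, 0), (86, 3),
   (95, 0), (115, 3), (27, 2), (94, 0), (116, 3), (122, 7), (24, 6), (31, 5), (37, 4), (56, 7),
   (126, 1), (128, 3), (5, 5), (31, 6), (8, 7), (47, 3), (115, 1), (52, 7), (120, 8), (126, 5),
   (23, 8), (114, 3), (116, 1), (123, 7), (126, 0), (73, 8), (121, 0), (128, 8), (94, 7), (94, 8),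
   (97, 0), (17, 5), (26, 6), (63, 4), (6, 8), (9, 7), (29, 2), (26, 5), (41, 2), (41, 5), (11, 7),
   (26, 8), (30, 7), (7, 8), (12, 8), (28, 7), (33, 4), (17, 4), (22, 8), (36, 5), (21, 6), (86, 5),
   (16, 5), (99, 6), (26, 4), (30, 2), (33, 8), (33, 2), (52, 4), (100, 7), (117, 0), (127, 4),
   (63, 7), (63, 8), (65, 4), (21, 7), (99, 8), (100, 4), (119, 7), (33, 5), (67, 6), (115, 7),
   (29, 5), (33, 6), (124, 6), (65, 7), (125, 8), (137, 8), (94, 4), (96, 2), (96, 4), (96, 5),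
   (99, 2), (100, 6), (113, 4)]

theorem enumeration_closes :
    (fun t => (CosetEnumeration.roots t 156).contains 0 &&
      CosetEnumeration.closed t (CosetEnumeration.roots t 156) &&
      (CosetEnumeration.roots t 156).length.ble 100)
      (CosetEnumeration.scanAll relatorWords subgroupWords cosetScans
        (CosetEnumeration.define 0 cosetDefs .nil)) = true := by
  decide +kernel

/-- The action of the first generator on 100 points. -/
def imagesA : List ℕ :=
  [0, 2, 5, 8, 11, 1, 15, 18, 20, 19, 21, 24, 25, 28, 30, 32, 34, 36, 39, 31, 3, 42, 22, 43, 4, 46,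
   45, 16, 47, 26, 48, 9, 6, 50, 27, 54, 56, 51, 57, 7, 49, 41, 10, 65, 35, 29, 12, 13, 14, 68, 71,
   74, 73, 53, 44, 79, 17, 75, 58, 81, 72, 59, 85, 62, 87, 23, 55, 60, 40, 64, 83, 33, 67, 80, 37,
   38, 91, 93, 78, 66, 52, 61, 82, 97, 95, 63, 86, 69, 94, 89, 77, 98, 92, 90, 96, 99, 88, 70, 76,
   84]

/-- The action of the second generator on 100 points. -/
def imagesB : List ℕ :=
  [0, 3, 6, 9, 12, 13, 16, 17, 15, 1, 23, 25, 24, 29, 14, 28, 2, 37, 38, 32, 40, 36, 44, 39, 4, 46,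
   20, 45, 8, 5, 41, 27, 49, 51, 47, 35, 57, 7, 60, 10, 26, 62, 50, 56, 66, 31, 11, 68, 63, 19, 72,
   75, 76, 64, 78, 54, 71, 21, 58, 82, 18, 61, 30, 86, 88, 74, 22, 65, 34, 89, 59, 43, 42, 91, 67,
   33, 80, 93, 55, 79, 52, 97, 70, 83, 95, 85, 48, 87, 53, 94, 84, 98, 81, 99, 69, 90, 96, 92, 73,
   77]

/-- The action of the third generator on 100 points. -/
def imagesC : List ℕ :=
  [1, 4, 7, 10, 0, 14, 17, 19, 21, 22, 13, 26, 27, 3, 31, 33, 35, 38, 18, 2, 41, 43, 29, 23, 45, 25,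
   30, 44, 28, 9, 11, 5, 32, 52, 53, 55, 58, 59, 6, 24, 61, 63, 64, 8, 12, 39, 67, 69, 48, 70, 73,
   76, 15, 77, 60, 16, 75, 71, 80, 83, 82, 84, 65, 20, 89, 87, 66, 90, 91, 85, 78, 92, 93, 94, 95,
   96, 97, 34, 49, 72, 36, 81, 54, 37, 40, 47, 74, 62, 88, 42, 46, 99, 57, 79, 50, 86, 56, 51, 98,
   68]

/-- The self-map of `Fin 100` given by a list of images. -/
def ofImages (l : List ℕ) (x : Fin 100) : Fin 100 := Fin.ofNat 100 (l.getD x 0)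

/-- A map with trivial cube, as a permutation. -/
def permOfCube {X : Type*} (f : X → X) (h : ∀ x, f (f (f x)) = x) : Equiv.Perm X where
  toFun := f
  invFun x := f (f x)
  left_inv := h
  right_inv := h

/-- The images of the three generators in the symmetric group on 100 points. -/
def genPerm : Fin 3 → Equiv.Perm (Fin 100) :=
  ![permOfCube (ofImages imagesA) (by decide +kernel),
    permOfCube (ofImages imagesB) (by decide +kernel),
    permOfCube (ofImages imagesC) (by decide +kernel)]

theorem lift_genPerm_eq_one : ∀ r ∈ jankoRels, FreeGroup.lift genPerm r = 1 := by
  intro r hr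
  simp only [jankoRels, Set.mem_insert_iff, Set.mem_singleton_iff] at hr
  rcases hr with rfl | rfl | rfl | rfl | rfl | rfl | rfl | rfl | rfl <;>
    simp only [map_mul, map_pow, map_inv, FreeGroup.lift_apply_of] <;>
    refine Equiv.ext ?_ <;> decide +kernel

/-- The action of the presented group on 100 points. -/
def permHom : PresentedGroup jankoRels →* Equiv.Perm (Fin 100) :=
  PresentedGroup.toGroup lift_genPerm_eq_one

@[simp]
theorem permHom_of (i : Fin 3) : permHom (PresentedGroup.of i) = genPerm i :=
  PresentedGroup.toGroup.of _

theorem exists_permHom_zero_eq (i : Fin 100) : ∃ g, permHom g 0 = i := by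
  have hpred : ∀ i : Fin 100, i = 0 ∨ ∃ j < i, ∃ k, genPerm k j = i := by decide +kernel
  induction i using WellFoundedLT.induction with
  | ind i ih =>
    rcases hpred i with rfl | ⟨j, hj, k, rfl⟩
    · exact ⟨1, by simp⟩
    · obtain ⟨g, hg⟩ := ih j hj
      exact ⟨PresentedGroup.of k * g, by simp [hg]⟩

/-- A subgroup fixing the point `0` has index at least 100 if its index is finite. -/
theorem hundred_le_index (H : Subgroup (PresentedGroup jankoRels)) (hfin : H.index ≠ 0)
    (hH : ∀ h ∈ H, permHom h 0 = 0) : 100 ≤ H.index := by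
  let _ : MulAction (PresentedGroup jankoRels) (Fin 100) := MulAction.compHom _ permHom
  have hle : H ≤ MulAction.stabilizer (PresentedGroup jankoRels) (0 : Fin 100) := hH
  have horb : MulAction.orbit (PresentedGroup jankoRels) (0 : Fin 100) = Set.univ :=
    Set.eq_univ_of_forall exists_permHom_zero_eq
  have hidx : (MulAction.stabilizer (PresentedGroup jankoRels) (0 : Fin 100)).index = 100 := by
    rw [MulAction.index_stabilizer, horb, Set.ncard_univ, Nat.card_fin]
  rw [← hidx]
  exact Nat.le_of_dvd (Nat.pos_of_ne_zero hfin) (Subgroup.index_dvd_of_le hle)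

/-- The element of the presented group denoted by a letter. -/
def letter : Fin 8 → PresentedGroup jankoRels :=
  ![.of 0, .of 1, .of 2, (.of 0)⁻¹, (.of 1)⁻¹, (.of 2)⁻¹, 1, 1]

theorem letter_invLetter (g : Fin 8) :
    letter (CosetEnumeration.invLetter g) = (letter g)⁻¹ := by
  fin_cases g <;> simp [letter, CosetEnumeration.invLetter]

theorem prod_relatorWords : ∀ w ∈ relatorWords, (w.map letter).prod = 1 := by
  have h : ∀ r ∈ jankoRels, PresentedGroup.mk jankoRels r = 1 := fun r hr =>
    PresentedGroup.one_of_mem hr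
  simp only [jankoRels, Set.forall_mem_insert, Set.mem_singleton_iff, forall_eq, mul_inv_rev,
    pow_succ, pow_zero, one_mul, ← mul_assoc] at h
  simp only [relatorWords, List.forall_mem_cons, List.map_cons, List.map_nil, List.prod_cons,
    List.prod_nil, mul_one, ← mul_assoc]
  obtain ⟨h1, h2, h3, h4, h5, h6, h7, h8, h9⟩ := h
  exact ⟨h1, h2, h3, h4, h5, h6, h7, h8, h9, by simp⟩

variable (H : Subgroup (PresentedGroup jankoRels))

/-- The right action of letters on the cosets of `H`. -/
def cosetAct (g : Fin 8) : Equiv.Perm (PresentedGroup jankoRels ⧸ H) :=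
  MulAction.toPermHom _ _ (letter g)⁻¹

theorem actWord_cosetAct (w : List (Fin 8)) (x : PresentedGroup jankoRels ⧸ H) :
    CosetEnumeration.actWord (cosetAct H) w x = (w.map letter).prod⁻¹ • x := by
  induction w generalizing x with
  | nil => simp [CosetEnumeration.actWord]
  | cons g w ih =>
    rw [List.map_cons, List.prod_cons, mul_inv_rev, mul_smul]
    exact ih _

theorem eq_univ_of_cosetAct_mem (S : Set (PresentedGroup jankoRels ⧸ H))
    (h1 : ((1 : PresentedGroup jankoRels) : PresentedGroup jankoRels ⧸ H) ∈ S)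
    (hS : ∀ x ∈ S, ∀ g ∈ [0, 1, 2, 3, 4, 5], cosetAct H g x ∈ S) : S = .univ := by
  have hof : ∀ (i : Fin 3), ∀ x ∈ S, PresentedGroup.of (rels := jankoRels) i • x ∈ S ∧
      (PresentedGroup.of (rels := jankoRels) i)⁻¹ • x ∈ S := by
    intro i x hx
    fin_cases i
    · exact ⟨by simpa [cosetAct, letter] using hS x hx 3 (by simp),
        by simpa [cosetAct, letter] using hS x hx 0 (by simp)⟩
    · exact ⟨by simpa [cosetAct, letter] using hS x hx 4 (by simp),
        by simpa [cosetAct, letter] using hS x hx 1 (by simp)⟩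
    · exact ⟨by simpa [cosetAct, letter] using hS x hx 5 (by simp),
        by simpa [cosetAct, letter] using hS x hx 2 (by simp)⟩
  have hsmul : ∀ g : PresentedGroup jankoRels, ∀ x ∈ S, g • x ∈ S := by
    intro g
    have hg : g ∈ Subgroup.closure (Set.range (PresentedGroup.of (rels := jankoRels))) := by
      rw [PresentedGroup.closure_range_of]; trivial
    induction hg using Subgroup.closure_induction'' with
    | mem x hx => obtain ⟨i, rfl⟩ := hx; exact fun x hx => (hof i x hx).1
    | inv_mem x hx => obtain ⟨i, rfl⟩ := hx; exact fun x hx => (hof i x hx).2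
    | one => simp
    | mul x y _ _ hx hy => exact fun z hz => by rw [mul_smul]; exact hx _ (hy _ hz)
  refine Set.eq_univ_of_forall fun x => ?_
  obtain ⟨g, rfl⟩ := QuotientGroup.mk_surjective x
  simpa using hsmul g _ h1

/-- A subgroup containing the values of the words in `subgroupWords` has index at most 100. -/
theorem index_le_hundred (hH : ∀ w ∈ subgroupWords, (w.map letter).prod ∈ H) :
    H.index ≠ 0 ∧ H.index ≤ 100 := by
  obtain ⟨hfin, hcard⟩ := CosetEnumeration.finite_and_card_le (act := cosetAct H)
    (x₀ := ((1 : PresentedGroup jankoRels) : PresentedGroup jankoRels ⧸ H))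
    (fun g => by simp only [cosetAct, letter_invLetter, map_inv])
    (by simp only [cosetAct, show letter 6 = 1 from rfl, inv_one, map_one])
    (fun w hw x => by rw [actWord_cosetAct, prod_relatorWords w hw, inv_one, one_smul])
    (fun w hw => by
      rw [actWord_cosetAct, MulAction.Quotient.smul_coe, smul_eq_mul, mul_one, QuotientGroup.eq]
      simpa using hH w hw)
    (eq_univ_of_cosetAct_mem H) cosetDefs cosetScans enumeration_closes
  exact ⟨Nat.card_pos.ne', hcard⟩

end Janko

theorem janko_subgroup_index_100 :
    let a : PresentedGroup jankoRels := PresentedGroup.of 0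
    let b : PresentedGroup jankoRels := PresentedGroup.of 1
    let c : PresentedGroup jankoRels := PresentedGroup.of 2
    (Subgroup.closure {a, b, (c * a⁻¹ * c)⁻¹ * b * (c * a⁻¹ * c)}).index = 100 := by
  intro a b c
  set H := Subgroup.closure {a, b, (c * a⁻¹ * c)⁻¹ * b * (c * a⁻¹ * c)} with hH
  have hsub : ({a, b, (c * a⁻¹ * c)⁻¹ * b * (c * a⁻¹ * c)} : Set _) ⊆ H := Subgroup.subset_closure
  obtain ⟨hfin, hle⟩ := Janko.index_le_hundred H <| by
    simp only [Janko.subgroupWords, List.forall_mem_cons, List.map_cons, List.map_nil,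
      List.prod_cons, List.prod_nil, mul_one]
    refine ⟨hsub (by simp [Janko.letter, a]), hsub (by simp [Janko.letter, b]), ?_, by simp⟩
    exact hsub (by simp [Janko.letter, a, b, c, mul_assoc])
  refine le_antisymm hle (Janko.hundred_le_index H hfin fun h hh => ?_)
  have hstab : H ≤ (MulAction.stabilizer (Equiv.Perm (Fin 100)) (0 : Fin 100)).comap
      Janko.permHom := by
    rw [hH, Subgroup.closure_le]
    rintro x (rfl | rfl | rfl) <;>
      simp only [SetLike.mem_coe, Subgroup.mem_comap, MulAction.mem_stabilizer_iff, map_mul, map_inv,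
        Janko.permHom_of, Equiv.Perm.smul_def, a, b, c] <;>
      decide +kernel
  exact hstab hh
end

section
/- The Fibonacci group F(2,9), given by the two-generator presentation with generators a, b and relators b·a·b·a·b²·a·b²·a⁻¹·b·a⁻²·b·a⁻² and a·b²·a·b²·a·b·a·b²·a·b·a²·b⁻¹·a·b⁻¹, is an infinite group. -/
/-- The Fibonacci group `F(2,9)`. -/
abbrev FibGroup : Type := PresentedGroup fibTwoRels

namespace FibGroup

/-- The nine cyclically indexed generators of `F(2,9)`. -/
def gen : ZMod 9 → FibGroup :=
  let a : FibGroup := PresentedGroup.of 0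
  let b : FibGroup := PresentedGroup.of 1
  ![a, b, a * b, b * (a * b), a * b * (b * (a * b)), b * (a * b) * (a * b * (b * (a * b))),
    b * a⁻¹ * (b * (a ^ 2)⁻¹), a ^ 2 * b⁻¹, b * a⁻¹]

lemma gen_zero : gen 0 = PresentedGroup.of 0 := rfl

lemma gen_one : gen 1 = PresentedGroup.of 1 := rfl

lemma gen_mul (i : ZMod 9) : gen i * gen (i + 1) = gen (i + 2) := by
  have h₁ := PresentedGroup.one_of_mem (rels := fibTwoRels)
    (x := _) (Set.mem_insert _ _)
  have h₂ := PresentedGroup.one_of_mem (rels := fibTwoRels)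
    (x := _) (Set.mem_insert_of_mem _ (Set.mem_singleton _))
  simp only [map_mul, map_pow, map_inv] at h₁ h₂
  set a : FibGroup := PresentedGroup.of 0 with ha
  set b : FibGroup := PresentedGroup.of 1 with hb
  change b * a * b * a * b ^ 2 * a * b ^ 2 * a⁻¹ * b * (a ^ 2)⁻¹ * b * (a ^ 2)⁻¹ = 1 at h₁
  change a * b ^ 2 * a * b ^ 2 * a * b * a * b ^ 2 * a * b * a ^ 2 * b⁻¹ * a * b⁻¹ = 1 at h₂
  fin_cases i
  · rfl
  · rfl
  · rfl
  · rfl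
  · change a * b * (b * (a * b)) * (b * (a * b) * (a * b * (b * (a * b)))) =
      b * a⁻¹ * (b * (a ^ 2)⁻¹)
    rw [← mul_inv_eq_one, ← h₂]
    simp [pow_two, mul_assoc]
  · change b * (a * b) * (a * b * (b * (a * b))) * (b * a⁻¹ * (b * (a ^ 2)⁻¹)) = a ^ 2 * b⁻¹
    rw [← mul_inv_eq_one, ← h₁]
    simp [pow_two, mul_assoc]
  · change b * a⁻¹ * (b * (a ^ 2)⁻¹) * (a ^ 2 * b⁻¹) = b * a⁻¹
    group
  · change a ^ 2 * b⁻¹ * (b * a⁻¹) = a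
    group
  · change b * a⁻¹ * a = b
    group

lemma closure_gen : Subgroup.closure (Set.range gen) = ⊤ := by
  rw [eq_top_iff, ← PresentedGroup.closure_range_of fibTwoRels, Subgroup.closure_le]
  rintro _ ⟨i, rfl⟩
  fin_cases i
  · exact Subgroup.subset_closure ⟨0, rfl⟩
  · exact Subgroup.subset_closure ⟨1, rfl⟩

/-- A subgroup containing the generators is everything. -/
lemma mem_of_gen_mem {S : Subgroup FibGroup} (h : ∀ i, gen i ∈ S) (g : FibGroup) : g ∈ S := by
  have : (⊤ : Subgroup FibGroup) ≤ S := by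
    rw [← closure_gen, Subgroup.closure_le]
    rintro _ ⟨i, rfl⟩
    exact h i
  exact this trivial

/-- A family of group elements satisfying the cyclic Fibonacci relations is the image of the
generators under a homomorphism. -/
lemma exists_hom {Γ : Type*} [Group Γ] (x : ZMod 9 → Γ) (hx : ∀ i, x i * x (i + 1) = x (i + 2)) :
    ∃ φ : FibGroup →* Γ, ∀ i, φ (gen i) = x i := by
  have h2 : x 2 = x 0 * x 1 := (hx 0).symm
  have h3 : x 3 = x 1 * x 2 := (hx 1).symm
  have h4 : x 4 = x 2 * x 3 := (hx 2).symm
  have h5 : x 5 = x 3 * x 4 := (hx 3).symm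
  have h8 : x 8 = x 1 * (x 0)⁻¹ := eq_mul_inv_of_mul_eq (hx 8)
  have h7 : x 7 = x 0 * (x 8)⁻¹ := eq_mul_inv_of_mul_eq (hx 7)
  have h6 : x 6 = x 8 * (x 7)⁻¹ := eq_mul_inv_of_mul_eq (hx 6)
  have r₁ : x 5 * x 6 = x 7 := hx 5
  have r₂ : x 4 * x 5 = x 6 := hx 4
  have hrel : ∀ r ∈ fibTwoRels, FreeGroup.lift ![x 0, x 1] r = 1 := by
    rintro r (rfl | rfl)
    · simp only [map_mul, map_pow, map_inv, FreeGroup.lift_apply_of, Matrix.cons_val_zero,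
        Matrix.cons_val_one]
      rw [← mul_inv_eq_one.2 r₁, h6, h7, h8, h5, h4, h3, h2]
      simp [pow_two, mul_assoc]
    · simp only [map_mul, map_pow, map_inv, FreeGroup.lift_apply_of, Matrix.cons_val_zero,
        Matrix.cons_val_one]
      rw [← mul_inv_eq_one.2 r₂, h6, h7, h8, h5, h4, h3, h2]
      simp [pow_two, mul_assoc]
  let φ := PresentedGroup.toGroup hrel
  have e0 : φ (gen 0) = x 0 := PresentedGroup.toGroup.of hrel
  have e1 : φ (gen 1) = x 1 := PresentedGroup.toGroup.of hrel
  have step (i : ZMod 9) (h : φ (gen i) = x i) (h' : φ (gen (i + 1)) = x (i + 1)) :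
      φ (gen (i + 2)) = x (i + 2) := by rw [← gen_mul, map_mul, h, h', hx]
  have e2 := step 0 e0 e1
  have e3 := step 1 e1 e2
  have e4 := step 2 e2 e3
  have e5 := step 3 e3 e4
  have e6 := step 4 e4 e5
  have e7 := step 5 e5 e6
  have e8 := step 6 e6 e7
  refine ⟨φ, fun i ↦ ?_⟩
  fin_cases i
  exacts [e0, e1, e2, e3, e4, e5, e6, e7, e8]

/-- The involution measuring the failure of neighbouring generators to commute. -/
def invol : FibGroup := gen 1 * gen 0 * (gen 2)⁻¹

private lemma invol_step (i : ZMod 9) :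
    gen (i + 2) * gen (i + 1) * (gen (i + 3))⁻¹ = (gen (i + 1) * gen i * (gen (i + 2))⁻¹)⁻¹ := by
  have h : gen (i + 3) = gen (i + 1) * gen (i + 2) := by
    rw [show i + 3 = i + 1 + 2 by ring, ← gen_mul, show i + 1 + 1 = i + 2 by ring]
  rw [h, ← gen_mul i]
  group

private lemma invol_even (n : ℕ) :
    gen (2 * n + 1) * gen (2 * n) * (gen (2 * n + 2))⁻¹ = invol := by
  induction n with
  | zero => simp [invol]
  | succ n ih =>
    have h₁ := invol_step (2 * n)
    have h₂ := invol_step (2 * n + 1)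
    rw [show (2 * n + 1 + 2 : ZMod 9) = 2 * n + 3 by ring,
      show (2 * n + 1 + 1 : ZMod 9) = 2 * n + 2 by ring,
      show (2 * n + 1 + 3 : ZMod 9) = 2 * n + 4 by ring, h₁, inv_inv, ih] at h₂
    rw [← h₂]
    push_cast
    ring_nf

/-- Exchanging two neighbouring generators costs a factor `invol`. -/
lemma gen_succ_mul (i : ZMod 9) : gen (i + 1) * gen i = invol * gen (i + 2) := by
  have h := invol_even (i * 5).val
  have h' : (2 * (((i * 5).val : ℕ) : ZMod 9)) = i := by
    rw [ZMod.natCast_zmod_val]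
    clear h
    revert i
    decide
  rw [h'] at h
  rw [← h]
  group

lemma invol_mul_self : invol * invol = 1 := by
  have h : invol = invol⁻¹ := by
    have := invol_step 0
    simp only [zero_add] at this
    rw [show gen 1 * gen 0 * (gen 2)⁻¹ = invol from rfl] at this
    rw [← this]
    have h1 := gen_succ_mul 1
    rw [show (1 : ZMod 9) + 1 = 2 from rfl, show (1 : ZMod 9) + 2 = 3 from rfl] at h1
    rw [h1]
    group
  nth_rw 2 [h]
  group

lemma invol_inv : invol⁻¹ = invol := inv_eq_of_mul_eq_one_left invol_mul_self

end FibGroup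

/-- A map `f` to a representation satisfying the cocycle identity. -/
def IsCocycle {k G Y : Type*} [Ring k] [AddCommGroup Y] [Module k Y] [Group G]
    (τ : G →* Module.End k Y) (f : G → Y) : Prop :=
  ∀ g h, f (g * h) = f g + τ g (f h)

namespace IsCocycle

variable {k G Y : Type*} [Ring k] [AddCommGroup Y] [Module k Y] [Group G]
  {τ : G →* Module.End k Y} {f : G → Y}

lemma map_one (hf : IsCocycle τ f) : f 1 = 0 := by
  have := hf 1 1
  simpa using this

lemma map_inv (hf : IsCocycle τ f) (g : G) : f g⁻¹ = -τ g⁻¹ (f g) := by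
  have := hf g⁻¹ g
  rw [inv_mul_cancel, hf.map_one] at this
  exact eq_neg_of_add_eq_zero_left this.symm

/-- The elements at which a cocycle takes values in an invariant submodule form a subgroup. -/
def valueSubgroup (hf : IsCocycle τ f) (P : Submodule k Y) (hP : ∀ g, ∀ y ∈ P, τ g y ∈ P) :
    Subgroup G where
  carrier := {g | f g ∈ P}
  one_mem' := by simp [hf.map_one]
  mul_mem' {g h} hg hh := by
    simp only [Set.mem_ofPred_eq, hf g h]
    exact P.add_mem hg (hP _ _ hh)
  inv_mem' {g} hg := by
    simp only [Set.mem_ofPred_eq, hf.map_inv g]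
    exact P.neg_mem (hP _ _ hg)

/-- The zero set of a cocycle is a subgroup. -/
def zeroSubgroup (hf : IsCocycle τ f) : Subgroup G :=
  hf.valueSubgroup ⊥ (by simp)

lemma mem_zeroSubgroup (hf : IsCocycle τ f) {g : G} : g ∈ hf.zeroSubgroup ↔ f g = 0 := Iff.rfl

end IsCocycle

namespace FibGroup

lemma rep_mul_apply {k G Y : Type*} [Ring k] [AddCommGroup Y] [Module k Y] [Group G]
    (τ : G →* Module.End k Y) (g h : G) (y : Y) : τ (g * h) y = τ g (τ h y) := by
  rw [map_mul, Module.End.mul_apply]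

lemma rep_inv_apply {k G Y : Type*} [Ring k] [AddCommGroup Y] [Module k Y] [Group G]
    (τ : G →* Module.End k Y) (g : G) (y : Y) : τ g⁻¹ (τ g y) = y := by
  rw [← rep_mul_apply, inv_mul_cancel, map_one, Module.End.one_apply]

lemma rep_apply_inv {k G Y : Type*} [Ring k] [AddCommGroup Y] [Module k Y] [Group G]
    (τ : G →* Module.End k Y) (g : G) (y : Y) : τ g (τ g⁻¹ y) = y := by
  rw [← rep_mul_apply, mul_inv_cancel, map_one, Module.End.one_apply]

variable {k Y : Type*} [Ring k] [AddCommGroup Y] [Module k Y] {τ : FibGroup →* Module.End k Y}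

/-- A family killed by the Fox derivatives of the relators extends to a cocycle. -/
lemma exists_isCocycle {m : ZMod 9 → Y}
    (hm : ∀ i, m i + τ (gen i) (m (i + 1)) = m (i + 2)) :
    ∃ f : FibGroup → Y, IsCocycle τ f ∧ ∀ i, f (gen i) = m i := by
  let x (i : ZMod 9) : Equiv.Perm Y :=
    { toFun y := m i + τ (gen i) y
      invFun y := τ (gen i)⁻¹ (y - m i)
      left_inv y := by simp
      right_inv y := by simp }
  have hx i : x i * x (i + 1) = x (i + 2) := by
    ext y
    change m i + τ (gen i) (m (i + 1) + τ (gen (i + 1)) y) = m (i + 2) + τ (gen (i + 2)) y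
    rw [map_add, ← add_assoc, hm, ← rep_mul_apply, gen_mul]
  obtain ⟨φ, hφ⟩ := exists_hom x hx
  let S : Subgroup FibGroup :=
    { carrier := {g | ∀ y, φ g y = φ g 0 + τ g y}
      one_mem' := by simp
      mul_mem' := by
        intro g h hg hh y
        rw [map_mul, Equiv.Perm.mul_apply, Equiv.Perm.mul_apply, hh, hg, hg (φ h 0), map_add,
          rep_mul_apply, add_assoc]
      inv_mem' := by
        intro g hg y
        have h₁ (z : Y) : φ g (φ g⁻¹ z) = z := by
          rw [← Equiv.Perm.mul_apply, ← map_mul, mul_inv_cancel, map_one, Equiv.Perm.one_apply]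
        have h₂ := h₁ y
        have h₃ := h₁ 0
        rw [hg] at h₂ h₃
        have h₄ : τ g (φ g⁻¹ y - φ g⁻¹ 0) = y := by
          rw [map_sub, ← add_sub_add_left_eq_sub _ _ (φ g 0), h₂, h₃, sub_zero]
        rw [← h₄, rep_inv_apply, h₄]
        abel }
  have hS (g : FibGroup) : ∀ y, φ g y = φ g 0 + τ g y := by
    refine mem_of_gen_mem (S := S) (fun i y ↦ ?_) g
    rw [hφ]
    change m i + τ (gen i) y = m i + τ (gen i) 0 + τ (gen i) y
    simp
  refine ⟨fun g ↦ φ g 0, fun g h ↦ ?_, fun i ↦ ?_⟩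
  · simp only [map_mul, Equiv.Perm.mul_apply]
    exact hS g _
  · simp only [hφ]
    change m i + τ (gen i) 0 = m i
    simp

end FibGroup

namespace FibGroup

open scoped Kronecker

/-- The powers `U ^ (5 ^ i)` of the companion matrix `U` of an irreducible factor of degree `9` of
`X ^ 19 - 1` over the field with five elements. -/
def rootMatrix : ZMod 9 → Matrix (Fin 9) (Fin 9) (ZMod 5) :=
  ![
    !![0, 0, 0, 0, 0, 0, 0, 0, 1; 1, 0, 0, 0, 0, 0, 0, 0, 0; 0, 1, 0, 0, 0, 0, 0, 0, 3; 0, 0, 1, 0,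
    0, 0, 0, 0, 2; 0, 0, 0, 1, 0, 0, 0, 0, 2; 0, 0, 0, 0, 1, 0, 0, 0, 2; 0, 0, 0, 0, 0, 1, 0, 0, 4;
    0, 0, 0, 0, 0, 0, 1, 0, 2; 0, 0, 0, 0, 0, 0, 0, 1, 4],
    !![0, 0, 0, 0, 1, 4, 3, 4, 0; 0, 0, 0, 0, 0, 1, 4, 3, 4; 0, 0, 0, 0, 3, 2, 0, 1, 3; 0, 0, 0, 0,
    2, 1, 3, 3, 1; 0, 0, 0, 0, 2, 0, 2, 1, 3; 1, 0, 0, 0, 2, 0, 1, 0, 1; 0, 1, 0, 0, 4, 3, 2, 2, 0;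
    0, 0, 1, 0, 2, 2, 4, 0, 2; 0, 0, 0, 1, 4, 3, 4, 0, 0],
    !![0, 0, 0, 1, 4, 3, 4, 0, 0; 0, 0, 0, 0, 1, 4, 3, 4, 0; 0, 0, 0, 3, 2, 0, 1, 3, 4; 0, 0, 0, 2,
    1, 3, 3, 1, 3; 0, 0, 0, 2, 0, 2, 1, 3, 1; 0, 0, 0, 2, 0, 1, 0, 1, 3; 1, 0, 0, 4, 3, 2, 2, 0, 1;
    0, 1, 0, 2, 2, 4, 0, 2, 0; 0, 0, 1, 4, 3, 4, 0, 0, 2],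
    !![3, 4, 0, 0, 2, 3, 2, 0, 1; 4, 3, 4, 0, 0, 2, 3, 2, 0; 0, 1, 3, 4, 1, 4, 3, 3, 0; 3, 3, 1, 3,
    3, 2, 3, 3, 0; 2, 1, 3, 1, 2, 4, 1, 3, 0; 1, 0, 1, 3, 0, 3, 3, 1, 0; 2, 2, 0, 1, 1, 2, 1, 3, 0;
    4, 0, 2, 0, 0, 2, 1, 1, 0; 4, 0, 0, 2, 3, 2, 0, 1, 0],
    !![2, 0, 1, 0, 0, 0, 0, 0, 0; 3, 2, 0, 1, 0, 0, 0, 0, 0; 3, 3, 0, 0, 1, 0, 0, 0, 0; 3, 3, 0, 0,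
    0, 1, 0, 0, 0; 1, 3, 0, 0, 0, 0, 1, 0, 0; 3, 1, 0, 0, 0, 0, 0, 1, 0; 1, 3, 0, 0, 0, 0, 0, 0, 1;
    1, 1, 0, 0, 0, 0, 0, 0, 0; 0, 1, 0, 0, 0, 0, 0, 0, 0],
    !![1, 4, 3, 4, 0, 0, 2, 3, 2; 0, 1, 4, 3, 4, 0, 0, 2, 3; 3, 2, 0, 1, 3, 4, 1, 4, 3; 2, 1, 3, 3,
    1, 3, 3, 2, 3; 2, 0, 2, 1, 3, 1, 2, 4, 1; 2, 0, 1, 0, 1, 3, 0, 3, 3; 4, 3, 2, 2, 0, 1, 1, 2, 1;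
    2, 2, 4, 0, 2, 0, 0, 2, 1; 4, 3, 4, 0, 0, 2, 3, 2, 0],
    !![0, 0, 1, 4, 3, 4, 0, 0, 2; 0, 0, 0, 1, 4, 3, 4, 0, 0; 0, 0, 3, 2, 0, 1, 3, 4, 1; 0, 0, 2, 1,
    3, 3, 1, 3, 3; 0, 0, 2, 0, 2, 1, 3, 1, 2; 0, 0, 2, 0, 1, 0, 1, 3, 0; 0, 0, 4, 3, 2, 2, 0, 1, 1;
    1, 0, 2, 2, 4, 0, 2, 0, 0; 0, 1, 4, 3, 4, 0, 0, 2, 3],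
    !![3, 2, 0, 1, 0, 0, 0, 0, 0; 2, 3, 2, 0, 1, 0, 0, 0, 0; 4, 3, 3, 0, 0, 1, 0, 0, 0; 2, 3, 3, 0,
    0, 0, 1, 0, 0; 4, 1, 3, 0, 0, 0, 0, 1, 0; 3, 3, 1, 0, 0, 0, 0, 0, 1; 2, 1, 3, 0, 0, 0, 0, 0, 0;
    2, 1, 1, 0, 0, 0, 0, 0, 0; 2, 0, 1, 0, 0, 0, 0, 0, 0],
    !![0, 0, 0, 0, 0, 1, 4, 3, 4; 0, 0, 0, 0, 0, 0, 1, 4, 3; 0, 0, 0, 0, 0, 3, 2, 0, 1; 0, 0, 0, 0,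
    0, 2, 1, 3, 3; 1, 0, 0, 0, 0, 2, 0, 2, 1; 0, 1, 0, 0, 0, 2, 0, 1, 0; 0, 0, 1, 0, 0, 4, 3, 2, 2;
    0, 0, 0, 1, 0, 2, 2, 4, 0; 0, 0, 0, 0, 1, 4, 3, 4, 0]]

/-- Three anticommuting square roots of `±1`, repeated periodically. -/
def quatMatrix : ZMod 9 → Matrix (Fin 2) (Fin 2) (ZMod 5) :=
  ![!![2, 0; 0, 3], !![0, 1; 4, 0], !![0, 2; 2, 0],
    !![2, 0; 0, 3], !![0, 1; 4, 0], !![0, 2; 2, 0],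
    !![2, 0; 0, 3], !![0, 1; 4, 0], !![0, 2; 2, 0]]

/-- The values on the generators of a cocycle with respect to `quatMatrix ⊗ₖ rootMatrix`. -/
def cocycleVec (i : ZMod 9) (x : Fin 2 × Fin 9) : ZMod 5 :=
  (![
    !![1, 0, 0, 0, 0, 0, 0, 0, 0; 2, 3, 3, 2, 3, 0, 0, 3, 1],
    !![3, 1, 0, 2, 2, 0, 0, 2, 3; 2, 1, 1, 3, 1, 1, 3, 1, 2],
    !![2, 1, 0, 2, 1, 1, 4, 2, 3; 3, 4, 4, 2, 4, 0, 2, 4, 3],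
    !![4, 3, 0, 1, 2, 1, 2, 3, 4; 2, 1, 0, 4, 0, 0, 3, 0, 2],
    !![4, 4, 1, 3, 2, 4, 1, 0, 3; 3, 2, 2, 3, 2, 1, 0, 2, 2],
    !![2, 4, 0, 3, 0, 4, 2, 2, 1; 0, 2, 1, 4, 3, 2, 2, 0, 1],
    !![0, 2, 0, 1, 0, 1, 3, 2, 0; 4, 0, 4, 1, 1, 4, 0, 1, 3],
    !![0, 2, 0, 2, 2, 3, 2, 4, 0; 3, 0, 1, 1, 0, 0, 4, 1, 3],
    !![2, 1, 3, 3, 4, 3, 3, 4, 3; 2, 1, 1, 3, 4, 1, 3, 1, 2]] :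
    ZMod 9 → Matrix (Fin 2) (Fin 9) (ZMod 5)) i x.1 x.2

lemma rootMatrix_mul (i : ZMod 9) :
    rootMatrix i * rootMatrix (i + 1) = rootMatrix (i + 2) := by
  revert i
  decide +kernel

lemma quatMatrix_mul (i : ZMod 9) :
    quatMatrix i * quatMatrix (i + 1) = quatMatrix (i + 2) := by
  revert i
  decide +kernel

lemma rootMatrix_triple (i : ZMod 9) :
    rootMatrix i * rootMatrix (i + 3) * rootMatrix (i + 6) = 1 := by
  revert i
  decide +kernel

lemma quatMatrix_triple (i : ZMod 9) :
    quatMatrix i * quatMatrix (i + 3) * quatMatrix (i + 6) = -quatMatrix i := by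
  revert i
  decide +kernel

lemma quatMatrix_mul_self (i : ZMod 9) : quatMatrix i * quatMatrix i = -1 := by
  revert i
  decide +kernel

lemma neg_kronecker {k m n p q : Type*} [Ring k] (A : Matrix m n k) (B : Matrix p q k) :
    (-A) ⊗ₖ B = -(A ⊗ₖ B) := by
  ext
  simp

/-- The matrices by which the generators act on an `18`-dimensional space. -/
def repMatrix (i : ZMod 9) : Matrix (Fin 2 × Fin 9) (Fin 2 × Fin 9) (ZMod 5) :=
  quatMatrix i ⊗ₖ rootMatrix i

lemma cocycleVec_add (i : ZMod 9) :
    cocycleVec i + (repMatrix i).mulVec (cocycleVec (i + 1)) = cocycleVec (i + 2) := by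
  revert i
  decide +kernel

lemma repMatrix_mul (i : ZMod 9) : repMatrix i * repMatrix (i + 1) = repMatrix (i + 2) := by
  rw [repMatrix, repMatrix, repMatrix, ← Matrix.mul_kronecker_mul, quatMatrix_mul, rootMatrix_mul]

lemma repMatrix_triple (i : ZMod 9) :
    repMatrix i * repMatrix (i + 3) * repMatrix (i + 6) = -(quatMatrix i ⊗ₖ 1) := by
  simp only [repMatrix]
  rw [← Matrix.mul_kronecker_mul, ← Matrix.mul_kronecker_mul, quatMatrix_triple,
    rootMatrix_triple, neg_kronecker]

lemma isUnit_repMatrix (i : ZMod 9) : IsUnit (repMatrix i) := by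
  have h : repMatrix i * (repMatrix (i + 3) * repMatrix (i + 6) * (quatMatrix i ⊗ₖ 1)) = 1 := by
    rw [← mul_assoc, ← mul_assoc, repMatrix_triple, neg_mul, ← Matrix.mul_kronecker_mul,
      quatMatrix_mul_self, neg_kronecker, neg_neg, mul_one, Matrix.one_kronecker_one]
  exact IsUnit.of_mul_eq_one _ h

lemma exists_rep : ∃ φ : FibGroup →* (Matrix (Fin 2 × Fin 9) (Fin 2 × Fin 9) (ZMod 5))ˣ,
    ∀ i, (φ (gen i) : Matrix (Fin 2 × Fin 9) (Fin 2 × Fin 9) (ZMod 5)) = repMatrix i := by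
  obtain ⟨φ, hφ⟩ := exists_hom (fun i ↦ (isUnit_repMatrix i).unit)
    (fun i ↦ Units.ext (by simpa using repMatrix_mul i))
  exact ⟨φ, fun i ↦ by rw [hφ, IsUnit.unit_spec]⟩

/-- The `18`-dimensional representation of `F(2,9)` over the field with five elements. -/
noncomputable def rep : FibGroup →* Module.End (ZMod 5) (Fin 2 × Fin 9 → ZMod 5) :=
  (Matrix.toLinAlgEquiv' :
    Matrix (Fin 2 × Fin 9) (Fin 2 × Fin 9) (ZMod 5) ≃ₐ[ZMod 5] _).toMonoidHom.comp
    ((Units.coeHom _).comp exists_rep.choose)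

lemma rep_gen (i : ZMod 9) : rep (gen i) = Matrix.toLinAlgEquiv' (repMatrix i) := by
  rw [← exists_rep.choose_spec i]
  rfl

lemma rep_gen_apply (i : ZMod 9) (v : Fin 2 × Fin 9 → ZMod 5) :
    rep (gen i) v = (repMatrix i).mulVec v := by
  rw [rep_gen, Matrix.toLinAlgEquiv'_apply]

lemma repMatrix_anticomm :
    repMatrix 1 * repMatrix 0 = -repMatrix 2 := by
  rw [repMatrix, repMatrix, repMatrix, ← Matrix.mul_kronecker_mul,
    show quatMatrix 1 * quatMatrix 0 = -quatMatrix 2 by decide +kernel,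
    show rootMatrix 1 * rootMatrix 0 = rootMatrix 2 by decide +kernel, neg_kronecker]

lemma rep_invol_apply (v : Fin 2 × Fin 9 → ZMod 5) : rep invol v = -v := by
  have e : gen 1 * gen 0 = invol * gen 2 := gen_succ_mul 0
  have h (w : Fin 2 × Fin 9 → ZMod 5) : rep invol (rep (gen 2) w) = -rep (gen 2) w := by
    rw [← rep_mul_apply, ← e, rep_mul_apply, rep_gen_apply, rep_gen_apply, rep_gen_apply,
      Matrix.mulVec_mulVec, repMatrix_anticomm, Matrix.neg_mulVec]
  rw [← rep_apply_inv rep (gen 2) v, h]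

lemma exists_cocycle_rep :
    ∃ f : FibGroup → Fin 2 × Fin 9 → ZMod 5, IsCocycle rep f ∧ ∀ i, f (gen i) = cocycleVec i := by
  refine exists_isCocycle (fun i ↦ ?_)
  rw [rep_gen_apply, cocycleVec_add]

/-- A cocycle with values in the `18`-dimensional representation. -/
noncomputable def cocycle : FibGroup → Fin 2 × Fin 9 → ZMod 5 := exists_cocycle_rep.choose

lemma isCocycle_cocycle : IsCocycle rep cocycle := exists_cocycle_rep.choose_spec.1

lemma cocycle_gen (i : ZMod 9) : cocycle (gen i) = cocycleVec i :=
  exists_cocycle_rep.choose_spec.2 i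

lemma cocycle_invol : cocycle invol = 0 := by
  have e : gen 1 * gen 0 = invol * gen 2 := gen_succ_mul 0
  have h := congrArg cocycle e
  rw [isCocycle_cocycle, isCocycle_cocycle, rep_invol_apply, cocycle_gen, cocycle_gen, cocycle_gen,
    rep_gen_apply] at h
  have h' : cocycleVec 1 + (repMatrix 1).mulVec (cocycleVec 0) = -cocycleVec 2 := by
    decide +kernel
  rw [h'] at h
  exact right_eq_add.1 h

lemma cocycle_comm_invol (g : FibGroup) :
    cocycle (invol * (g * invol * g⁻¹)) = -(2 : ZMod 5) • cocycle g := by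
  have h : cocycle (g * invol * g⁻¹) = (2 : ZMod 5) • cocycle g := by
    rw [isCocycle_cocycle, isCocycle_cocycle, cocycle_invol, isCocycle_cocycle.map_inv,
      rep_mul_apply, rep_invol_apply, neg_neg, rep_apply_inv, two_smul, map_zero, add_zero]
  rw [isCocycle_cocycle, cocycle_invol, h, rep_invol_apply, zero_add, neg_smul]

/-- The value of the cocycle at a generator generates the representation. -/
lemma eq_top_of_cocycleVec_mem {P : Submodule (ZMod 5) (Fin 2 × Fin 9 → ZMod 5)}
    (hP : ∀ g, ∀ v ∈ P, rep g v ∈ P) (h0 : cocycleVec 0 ∈ P) : P = ⊤ := by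
  have hquat (i : ZMod 9) (v) (hv : v ∈ P) :
      (quatMatrix i ⊗ₖ (1 : Matrix (Fin 9) (Fin 9) (ZMod 5))).mulVec v ∈ P := by
    have h := P.neg_mem (hP (gen i * gen (i + 3) * gen (i + 6)) v hv)
    rw [rep_mul_apply, rep_mul_apply, rep_gen_apply, rep_gen_apply, rep_gen_apply,
      Matrix.mulVec_mulVec, Matrix.mulVec_mulVec, repMatrix_triple, Matrix.neg_mulVec,
      neg_neg] at h
    exact h
  have hzero : (Pi.single (0, 0) 1 : Fin 2 × Fin 9 → ZMod 5) ∈ P := by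
    have h := P.sub_mem (P.smul_mem 3 h0) (hquat 0 _ h0)
    rwa [show (3 : ZMod 5) • cocycleVec 0 - (quatMatrix 0 ⊗ₖ
      (1 : Matrix (Fin 9) (Fin 9) (ZMod 5))).mulVec (cocycleVec 0) = Pi.single (0, 0) 1 by
        decide +kernel] at h
  have hfirst (j : ℕ) (hj : j < 9) :
      (Pi.single (0, (⟨j, hj⟩ : Fin 9)) 1 : Fin 2 × Fin 9 → ZMod 5) ∈ P := by
    induction j with
    | zero => exact hzero
    | succ j ih =>
      have h := P.smul_mem 3 (hP (gen 0) _ (ih (by omega)))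
      rw [rep_gen_apply] at h
      have e : ∀ j : Fin 8, (3 : ZMod 5) • (repMatrix 0).mulVec (Pi.single (0, j.castSucc) 1) =
          Pi.single (0, j.succ) 1 := by decide +kernel
      exact e ⟨j, by omega⟩ ▸ h
  have hsecond (j : Fin 9) : (Pi.single (1, j) 1 : Fin 2 × Fin 9 → ZMod 5) ∈ P := by
    have h := P.smul_mem 4 (hquat 1 _ (hfirst j j.2))
    have e : ∀ j : Fin 9, (4 : ZMod 5) • (quatMatrix 1 ⊗ₖ
        (1 : Matrix (Fin 9) (Fin 9) (ZMod 5))).mulVec (Pi.single (0, j) 1) =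
          Pi.single (1, j) 1 := by decide +kernel
    rwa [e] at h
  refine eq_top_iff.2 fun v _ ↦ ?_
  rw [← Finset.univ_sum_single v]
  refine P.sum_mem fun x _ ↦ ?_
  rw [show (Pi.single x (v x) : Fin 2 × Fin 9 → ZMod 5) = v x • Pi.single x 1 by
    rw [← Pi.single_smul, smul_eq_mul, mul_one]]
  refine P.smul_mem _ ?_
  obtain ⟨i, j⟩ := x
  fin_cases i
  · exact hfirst j j.2
  · exact hsecond j

end FibGroup

namespace FibGroup

/-- The normal closure of the involution `invol`. -/
def involClosure : Subgroup FibGroup := Subgroup.normalClosure {invol}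

instance : involClosure.Normal := Subgroup.normalClosure_normal

lemma invol_mem_involClosure : invol ∈ involClosure :=
  Subgroup.subset_normalClosure (Set.mem_singleton _)

/-- The elements of `involClosure` acting trivially on the `18`-dimensional representation. -/
noncomputable def core : Subgroup FibGroup := involClosure ⊓ rep.ker

instance : core.Normal := by
  unfold core
  infer_instance

lemma core_le : core ≤ involClosure := inf_le_left

lemma mem_core {g : FibGroup} : g ∈ core ↔ g ∈ involClosure ∧ ∀ v, rep g v = v := by
  rw [core, Subgroup.mem_inf, MonoidHom.mem_ker, LinearMap.ext_iff]
  rfl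

lemma rep_of_mem_core {g : FibGroup} (hg : g ∈ core) : rep g = 1 :=
  LinearMap.ext (mem_core.1 hg).2

lemma invol_notMem_core : invol ∉ core := by
  intro h
  have := (mem_core.1 h).2 (fun _ ↦ 1)
  rw [rep_invol_apply] at this
  have := congrFun this (0, 0)
  revert this
  decide

lemma rep_of_mem_involClosure {g : FibGroup} (hg : g ∈ involClosure) :
    (∀ v, rep g v = v) ∨ ∀ v, rep g v = -v := by
  let S : Subgroup FibGroup :=
    { carrier := {g | (∀ v, rep g v = v) ∨ ∀ v, rep g v = -v}
      one_mem' := Or.inl fun v ↦ by simp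
      mul_mem' := by
        rintro x y (hx | hx) (hy | hy) <;> simp [hx, hy]
      inv_mem' := by
        rintro x (hx | hx)
        · exact Or.inl fun v ↦ by rw [← hx (rep x⁻¹ v), rep_apply_inv]
        · exact Or.inr fun v ↦ by rw [← neg_neg (rep x⁻¹ v), ← hx (rep x⁻¹ v), rep_apply_inv] }
  have : S.Normal := by
    refine ⟨?_⟩
    rintro x (hx | hx) g
    · exact Or.inl fun v ↦ by rw [rep_mul_apply, rep_mul_apply, hx, rep_apply_inv]
    · exact Or.inr fun v ↦ by rw [rep_mul_apply, rep_mul_apply, hx, map_neg, rep_apply_inv]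
  have hle : involClosure ≤ S := by
    refine Subgroup.normalClosure_le_normal ?_
    rintro _ rfl
    exact Or.inr rep_invol_apply
  exact hle hg

lemma mem_core_or {g : FibGroup} (hg : g ∈ involClosure) : g ∈ core ∨ invol * g ∈ core := by
  rcases rep_of_mem_involClosure hg with h | h
  · exact Or.inl (mem_core.2 ⟨hg, h⟩)
  · refine Or.inr (mem_core.2 ⟨mul_mem invol_mem_involClosure hg, fun v ↦ ?_⟩)
    rw [rep_mul_apply, h, rep_invol_apply, neg_neg]

lemma invol_mul_conj_mem_core (g : FibGroup) : invol * (g * invol * g⁻¹) ∈ core := by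
  refine mem_core.2 ⟨mul_mem invol_mem_involClosure
    (Subgroup.Normal.conj_mem inferInstance _ invol_mem_involClosure g), fun v ↦ ?_⟩
  simp [rep_invol_apply]

/-- A subgroup of `core` that is normalised by `invol` and contains the commutators with `invol`
is everything. -/
lemma core_le_of_comm_mem {S : Subgroup FibGroup} (hS : S ≤ core)
    (hconj : ∀ x ∈ S, invol * x * invol ∈ S) (hcomm : ∀ g, invol * (g * invol * g⁻¹) ∈ S) :
    core ≤ S := by
  have cancel (x : FibGroup) : invol * (invol * x) = x := by
    rw [← mul_assoc, invol_mul_self, one_mul]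
  have key {x : FibGroup} (hx : x ∈ involClosure) : x ∈ S ∨ invol * x ∈ S := by
    unfold involClosure Subgroup.normalClosure at hx
    induction hx using Subgroup.closure_induction with
    | mem x hx =>
      obtain ⟨_, hy, hxy⟩ := Group.mem_conjugatesOfSet_iff.1 hx
      obtain ⟨g, rfl⟩ := isConj_iff.1 hxy
      rw [Set.mem_singleton_iff.1 hy]
      exact Or.inr (hcomm g)
    | one => exact Or.inl S.one_mem
    | mul x y _ _ hx hy =>
      rcases hx with hx | hx <;> rcases hy with hy | hy
      · exact Or.inl (S.mul_mem hx hy)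
      · refine Or.inr ?_
        have := S.mul_mem (hconj x hx) hy
        rwa [mul_assoc _ invol, cancel, mul_assoc] at this
      · exact Or.inr (by rw [← mul_assoc]; exact S.mul_mem hx hy)
      · refine Or.inl ?_
        have := S.mul_mem (hconj _ hx) hy
        rwa [cancel, mul_assoc, cancel] at this
    | inv x _ hx =>
      rcases hx with hx | hx
      · exact Or.inl (S.inv_mem hx)
      · refine Or.inr ?_
        have := hconj _ (S.inv_mem hx)
        rwa [mul_inv_rev, invol_inv, mul_assoc, mul_assoc, invol_mul_self, mul_one] at this
  intro x hx
  refine (key (core_le hx)).resolve_right fun h ↦ invol_notMem_core ?_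
  have := core.mul_mem (hS h) (core.inv_mem hx)
  rwa [mul_inv_cancel_right] at this

lemma closure_gen_pair : Subgroup.closure {gen 0, gen 1} = ⊤ := by
  rw [← PresentedGroup.closure_range_of fibTwoRels]
  congr 1
  ext x
  simp [Fin.exists_fin_two, gen_zero, gen_one, eq_comm]

lemma quotient_mk_invol : (invol : FibGroup ⧸ involClosure) = 1 :=
  (QuotientGroup.eq_one_iff _).2 invol_mem_involClosure

lemma closure_quotient_gen_pair :
    Subgroup.closure {(gen 0 : FibGroup ⧸ involClosure), (gen 1 : FibGroup ⧸ involClosure)} =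
      ⊤ := by
  have h := congrArg (Subgroup.map (QuotientGroup.mk' involClosure)) closure_gen_pair
  rw [MonoidHom.map_closure, Set.image_pair, ← MonoidHom.range_eq_map,
    MonoidHom.range_eq_top.2 (QuotientGroup.mk'_surjective _)] at h
  exact h

noncomputable instance : CommGroup (FibGroup ⧸ involClosure) :=
  { QuotientGroup.Quotient.group involClosure with
    mul_comm := by
      have h01 : (gen 0 : FibGroup ⧸ involClosure) * gen 1 = gen 1 * gen 0 := by
        have h := congrArg (QuotientGroup.mk (s := involClosure)) (gen_succ_mul 0)
        rw [QuotientGroup.mk_mul, QuotientGroup.mk_mul, quotient_mk_invol, one_mul,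
          ← gen_mul 0] at h
        exact h.symm
      have h := Subgroup.isMulCommutative_closure
        (k := {(gen 0 : FibGroup ⧸ involClosure), (gen 1 : FibGroup ⧸ involClosure)}) (by
          rintro _ (rfl | rfl) _ (rfl | rfl)
          exacts [rfl, h01, h01.symm, rfl])
      intro x y
      rw [closure_quotient_gen_pair] at h
      exact congrArg Subtype.val (h.is_comm.comm (⟨x, trivial⟩ : (⊤ : Subgroup _)) ⟨y, trivial⟩) }

lemma fib_additive {A : Type*} [AddCommGroup A] {x : ZMod 9 → A}
    (hx : ∀ i, x i + x (i + 1) = x (i + 2)) : 2 • x 0 = 8 • x 1 ∧ 38 • x 1 = 0 := by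
  have h2 : x 2 = x 0 + x 1 := (hx 0).symm
  have h3 : x 3 = x 1 + x 2 := (hx 1).symm
  have h4 : x 4 = x 2 + x 3 := (hx 2).symm
  have h5 : x 5 = x 3 + x 4 := (hx 3).symm
  have h6 : x 6 = x 4 + x 5 := (hx 4).symm
  have h7 : x 7 = x 5 + x 6 := (hx 5).symm
  have h8 : x 8 = x 6 + x 7 := (hx 6).symm
  have h9 : x 7 + x 8 = x 0 := hx 7
  have h10 : x 8 + x 0 = x 1 := hx 8
  rw [h8, h7, h6, h5, h4, h3, h2] at h9 h10
  constructor
  · linear_combination (norm := module) (-2 : ℤ) • h9 + (3 : ℤ) • h10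
  · linear_combination (norm := module) (7 : ℤ) • h9 - (10 : ℤ) • h10

lemma quotient_exists_nsmul (z : Additive (FibGroup ⧸ involClosure)) :
    38 • z = 0 ∧ ∃ p : Fin 2 × Fin 38,
      p.1.val • Additive.ofMul (gen 0 : FibGroup ⧸ involClosure) +
        p.2.val • Additive.ofMul (gen 1 : FibGroup ⧸ involClosure) = z := by
  obtain ⟨e₁, e₂⟩ := fib_additive
    (x := fun i ↦ Additive.ofMul (gen i : FibGroup ⧸ involClosure)) (fun i ↦ by
      rw [← ofMul_mul, ← QuotientGroup.mk_mul, gen_mul])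
  obtain ⟨m, n, hz⟩ := Subgroup.mem_closure_pair.1
    (closure_quotient_gen_pair ▸ Subgroup.mem_top z.toMul)
  replace hz : m • Additive.ofMul (gen 0 : FibGroup ⧸ involClosure) +
      n • Additive.ofMul (gen 1 : FibGroup ⧸ involClosure) = z := hz
  set x := Additive.ofMul (gen 0 : FibGroup ⧸ involClosure)
  set y := Additive.ofMul (gen 1 : FibGroup ⧸ involClosure)
  have e₁' : (2 : ℤ) • x = (8 : ℤ) • y := by exact_mod_cast e₁
  have e₂' : (38 : ℤ) • y = 0 := by exact_mod_cast e₂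
  constructor
  · have : (38 : ℤ) • z = 0 := by
      rw [← hz, smul_add, smul_smul, smul_smul, show 38 * m = 19 * m * 2 by ring,
        mul_comm 38 n, mul_smul, mul_smul n, e₁', e₂', smul_zero, smul_smul,
        show 19 * m * 8 = 4 * m * 38 by ring, mul_smul, e₂', smul_zero, add_zero]
    exact_mod_cast this
  · refine ⟨(⟨(m % 2).toNat, by omega⟩, ⟨((8 * (m / 2) + n) % 38).toNat, by omega⟩), ?_⟩
    dsimp only
    rw [← natCast_zsmul, ← natCast_zsmul, Int.toNat_of_nonneg (by omega),
      Int.toNat_of_nonneg (by omega), ← hz]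
    have h₁ : m • x = (m % 2) • x + (8 * (m / 2)) • y := by
      conv_lhs => rw [← Int.emod_add_mul_ediv m 2, add_smul, mul_comm, mul_smul, e₁', smul_smul,
        mul_comm]
    have h₂ : ((8 * (m / 2) + n) % 38) • y = (8 * (m / 2) + n) • y := by
      conv_rhs => rw [← Int.emod_add_mul_ediv (8 * (m / 2) + n) 38, add_smul, mul_comm 38, mul_smul,
        e₂', smul_zero, add_zero]
    rw [h₁, h₂, add_smul, add_assoc]

lemma index_involClosure_le : involClosure.index ≤ 76 := by
  have hs : Function.Surjective (fun p : Fin 2 × Fin 38 ↦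
      p.1.val • Additive.ofMul (gen 0 : FibGroup ⧸ involClosure) +
        p.2.val • Additive.ofMul (gen 1 : FibGroup ⧸ involClosure)) :=
    fun z ↦ (quotient_exists_nsmul z).2
  have := Nat.card_le_card_of_surjective _ hs
  rw [Nat.card_congr Additive.toMul] at this
  simpa [Subgroup.index] using this

lemma index_core_le : core.index ≤ 152 := by
  have h : core.relIndex involClosure = 2 := by
    refine Subgroup.index_eq_two_iff.2 ⟨⟨invol, invol_mem_involClosure⟩, fun b ↦ ?_⟩
    rw [Subgroup.mem_subgroupOf, Subgroup.mem_subgroupOf, Subgroup.coe_mul]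
    have hb : (b : FibGroup) * invol ∈ core ↔ invol * (b : FibGroup) ∈ core :=
      Subgroup.Normal.mem_comm_iff inferInstance
    rw [hb]
    rcases mem_core_or b.2 with h | h
    · refine Or.inr ⟨h, fun h' ↦ invol_notMem_core ?_⟩
      simpa using core.mul_mem h' (core.inv_mem h)
    · refine Or.inl ⟨h, fun h' ↦ invol_notMem_core ?_⟩
      simpa using core.mul_mem h (core.inv_mem h')
  rw [← Subgroup.relIndex_mul_index core_le, h]
  have := index_involClosure_le
  omega

lemma mem_core_of_pow_five_mem {g : FibGroup} (hg : g ^ 5 ∈ core) : g ∈ core := by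
  have h38 : g ^ 38 ∈ involClosure := by
    rw [← QuotientGroup.eq_one_iff, QuotientGroup.mk_pow]
    exact (quotient_exists_nsmul (Additive.ofMul (g : FibGroup ⧸ involClosure))).1
  have hK : g ∈ involClosure := by
    have := mul_mem (pow_mem (core_le hg) 23) (inv_mem (pow_mem h38 3))
    rwa [← pow_mul, ← pow_mul, show 5 * 23 = 38 * 3 + 1 by norm_num, pow_succ',
      mul_inv_cancel_right]
      at this
  have h2 : g ^ 2 ∈ core := by
    refine mem_core.2 ⟨pow_mem hK 2, fun v ↦ ?_⟩
    rw [pow_two, rep_mul_apply]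
    rcases rep_of_mem_involClosure hK with h | h <;> simp [h]
  have := mul_mem hg (inv_mem (pow_mem h2 2))
  rwa [← pow_mul, show 5 = 2 * 2 + 1 by norm_num, pow_succ', mul_inv_cancel_right] at this

lemma card_quotient_core_ne_zero [Finite FibGroup] :
    ((Nat.card (FibGroup ⧸ core) : ℕ) : ZMod 5) ≠ 0 := by
  rw [Ne, ZMod.natCast_eq_zero_iff]
  intro h
  have : Fact (Nat.Prime 5) := ⟨by norm_num⟩
  obtain ⟨q, hq⟩ := exists_prime_orderOf_dvd_card' 5 h
  induction q using QuotientGroup.induction_on with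
  | H g =>
    have h5 := pow_orderOf_eq_one (g : FibGroup ⧸ core)
    rw [hq, ← QuotientGroup.mk_pow, QuotientGroup.eq_one_iff] at h5
    rw [(QuotientGroup.eq_one_iff g).2 (mem_core_of_pow_five_mem h5), orderOf_one] at hq
    norm_num at hq

/-- The `18`-dimensional representation as a representation of the quotient by `core`. -/
noncomputable def quotRep :
    FibGroup ⧸ core →* Module.End (ZMod 5) (Fin 2 × Fin 9 → ZMod 5) :=
  QuotientGroup.lift core rep fun _ h ↦ rep_of_mem_core h

lemma quotRep_mk (g : FibGroup) : quotRep g = rep g := rfl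

/-- There is a choice of signs on the quotient by `core` that changes under `invol`. -/
lemma exists_sign : ∃ s : FibGroup ⧸ core → ZMod 5, s * s = 1 ∧
    (fun q ↦ s (q * (invol : FibGroup))) = -s := by
  let e := Finite.equivFin ((Fin 2 × Fin 9 → ZMod 5) → (Fin 2 × Fin 9 → ZMod 5))
  refine ⟨fun q ↦ if e (quotRep q) < e (fun v ↦ -quotRep q v) then 1 else -1, ?_, ?_⟩
  · ext q
    by_cases h : e (quotRep q) < e (fun v ↦ -quotRep q v) <;> simp [h]
  · ext q
    have h₁ : (quotRep (q * (invol : FibGroup)) : (Fin 2 × Fin 9 → ZMod 5) → _) =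
        fun v ↦ -quotRep q v := by
      ext1 v
      rw [map_mul, Module.End.mul_apply, quotRep_mk, rep_invol_apply, map_neg]
    have h₂ : (fun v ↦ -quotRep (q * (invol : FibGroup)) v) = quotRep q := by
      ext1 v
      rw [h₁, neg_neg]
    have hne : e (quotRep q) ≠ e (fun v ↦ -quotRep q v) := by
      intro h
      have h := congrFun (e.injective h) (quotRep q⁻¹ fun _ ↦ 1)
      rw [rep_apply_inv] at h
      have := congrFun h (0, 0)
      revert this
      decide
    beta_reduce
    rw [Pi.neg_apply, h₂, h₁]
    rcases lt_or_gt_of_ne hne with h | h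
    · rw [if_neg h.not_gt, if_pos h]
    · rw [if_pos h, if_neg h.not_gt, neg_neg]

end FibGroup

namespace FibGroup

instance : Fact (Nat.Prime 5) := ⟨by norm_num⟩

lemma conj_invol_mul_inv_mem_core (g : FibGroup) : invol * g * invol * g⁻¹ ∈ core := by
  simpa only [mul_assoc] using invol_mul_conj_mem_core g

lemma inv_mul_conj_invol_mem_core (g : FibGroup) : g⁻¹ * (invol * g * invol) ∈ core := by
  have h := Subgroup.Normal.conj_mem inferInstance _ (conj_invol_mul_inv_mem_core g) g⁻¹
  simpa only [mul_assoc, inv_inv, inv_mul_cancel, mul_one] using h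

/-- Left translation does not change the sum over coset representatives. -/
lemma sum_mul_out {Y : Type*} [AddCommMonoid Y] [Fintype (FibGroup ⧸ core)] {F : FibGroup → Y}
    (hF : ∀ g, ∀ h ∈ core, F (g * h) = F g) (g : FibGroup) :
    ∑ q : FibGroup ⧸ core, F (g * q.out) = ∑ q : FibGroup ⧸ core, F q.out := by
  have key (x : FibGroup) : F x = F (x : FibGroup ⧸ core).out := by
    have : x⁻¹ * (x : FibGroup ⧸ core).out ∈ core :=
      QuotientGroup.eq.1 (QuotientGroup.out_eq' (x : FibGroup ⧸ core)).symm
    rw [← hF x _ this, mul_inv_cancel_left]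
  rw [← Equiv.sum_comp (Equiv.mulLeft (g : FibGroup ⧸ core)) fun q ↦ F q.out]
  refine Finset.sum_congr rfl fun q _ ↦ ?_
  rw [key, QuotientGroup.mk_mul, QuotientGroup.out_eq', Equiv.coe_mulLeft]

variable {Y : Type*} [AddCommGroup Y] [Module (ZMod 5) Y]

lemma three_smul_add_self (y : Y) : (3 : ZMod 5) • (y + y) = y := by
  rw [← two_smul (ZMod 5), smul_smul, show (3 : ZMod 5) * 2 = 1 by decide, one_smul]

lemma eq_zero_of_add_self {y : Y} (h : y + y = 0) : y = 0 := by
  rw [← three_smul_add_self y, h, smul_zero]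

variable (τ : FibGroup →* Module.End (ZMod 5) Y)

/-- The map given by the Fox derivatives of the relators. -/
def relMap : (ZMod 9 → Y) →ₗ[ZMod 5] (ZMod 9 → Y) where
  toFun m i := m i + τ (gen i) (m (i + 1)) - m (i + 2)
  map_add' m n := by
    ext i
    simp only [Pi.add_apply, map_add]
    abel
  map_smul' a m := by
    ext i
    simp only [Pi.smul_apply, map_smul, RingHom.id_apply, smul_add, smul_sub]

@[simp]
lemma relMap_apply (m : ZMod 9 → Y) (i : ZMod 9) :
    relMap τ m i = m i + τ (gen i) (m (i + 1)) - m (i + 2) := rfl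

/-- The vectors fixed by `core`. -/
def coreInvariants : Submodule (ZMod 5) Y where
  carrier := {y | ∀ h ∈ core, τ h y = y}
  add_mem' {x y} hx hy h hh := by rw [map_add, hx h hh, hy h hh]
  zero_mem' h _ := map_zero _
  smul_mem' a y hy h hh := by rw [map_smul, hy h hh]

variable {τ}

lemma rep_eq_of_mem_coreInvariants {y : Y} (hy : y ∈ coreInvariants τ) {g g' : FibGroup}
    (h : g⁻¹ * g' ∈ core) : τ g' y = τ g y := by
  rw [← mul_inv_cancel_left g g', rep_mul_apply, hy _ h]

lemma rep_mem_coreInvariants {y : Y} (hy : y ∈ coreInvariants τ) (g : FibGroup) :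
    τ g y ∈ coreInvariants τ := by
  intro h hh
  rw [← rep_mul_apply]
  refine rep_eq_of_mem_coreInvariants hy ?_
  rw [← mul_assoc]
  simpa using Subgroup.Normal.conj_mem inferInstance h hh g⁻¹

lemma rep_conj_of_mem_coreInvariants {y : Y} (hy : y ∈ coreInvariants τ) (g : FibGroup) :
    τ (invol * g * invol) y = τ g y :=
  rep_eq_of_mem_coreInvariants hy (inv_mul_conj_invol_mem_core g)

lemma rep_invol_rep_invol (y : Y) : τ invol (τ invol y) = y := by
  rw [← rep_mul_apply, invol_mul_self, map_one, Module.End.one_apply]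

lemma rep_invol_comm {y : Y} (hy : y ∈ coreInvariants τ) (g : FibGroup) :
    τ invol (τ g y) = τ g (τ invol y) := by
  have h := rep_conj_of_mem_coreInvariants (rep_mem_coreInvariants hy invol) g
  rwa [rep_mul_apply, rep_mul_apply, rep_invol_rep_invol] at h

lemma relMap_rep_invol {m : ZMod 9 → Y} (hm : ∀ i, m i ∈ coreInvariants τ) (i : ZMod 9) :
    relMap τ (fun j ↦ τ invol (m j)) i = τ invol (relMap τ m i) := by
  simp only [relMap_apply, map_add, map_sub]
  rw [rep_invol_comm (hm _)]

lemma relMap_mem_coreInvariants {m : ZMod 9 → Y} (hm : ∀ i, m i ∈ coreInvariants τ) (i : ZMod 9) :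
    relMap τ m i ∈ coreInvariants τ :=
  sub_mem (add_mem (hm _) (rep_mem_coreInvariants (hm _) _)) (hm _)

lemma relMap_sub_self (p : Y) : relMap τ (fun i ↦ τ (gen i) p - p) = 0 := by
  ext i
  simp only [relMap_apply, map_sub, Pi.zero_apply]
  rw [← rep_mul_apply, gen_mul]
  abel

/-- Cocycles fixed by `core` and `invol` are coboundaries. -/
lemma exists_eq_sub_self [Finite FibGroup] {n : ZMod 9 → Y} (hn : ∀ i, n i ∈ coreInvariants τ)
    (hc : ∀ i, τ invol (n i) = n i) (hrel : relMap τ n = 0) :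
    ∃ p ∈ coreInvariants τ, τ invol p = p ∧ ∀ i, n i = τ (gen i) p - p := by
  have : Fintype (FibGroup ⧸ core) := Fintype.ofFinite _
  obtain ⟨f, hf, hfn⟩ := exists_isCocycle (τ := τ) (m := n)
    fun i ↦ sub_eq_zero.1 (congrFun hrel i)
  let Z : Submodule (ZMod 5) Y := coreInvariants τ ⊓ LinearMap.ker (τ invol - 1)
  have hZ {y : Y} : y ∈ Z ↔ y ∈ coreInvariants τ ∧ τ invol y = y := by
    simp [Z, sub_eq_zero]
  have hZrep (g : FibGroup) (y : Y) (hy : y ∈ Z) : τ g y ∈ Z := by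
    rw [hZ] at hy ⊢
    exact ⟨rep_mem_coreInvariants hy.1 g, by rw [rep_invol_comm hy.1, hy.2]⟩
  have hfZ (g : FibGroup) : f g ∈ Z :=
    mem_of_gen_mem (S := hf.valueSubgroup Z hZrep)
      (fun i ↦ show f (gen i) ∈ Z by rw [hfn, hZ]; exact ⟨hn i, hc i⟩) g
  have hfc : f invol = 0 := by
    have h := hf invol invol
    rw [invol_mul_self, hf.map_one, (hZ.1 (hfZ _)).2] at h
    exact eq_zero_of_add_self h.symm
  have hfK : involClosure ≤ hf.zeroSubgroup := by
    refine (Subgroup.closure_le _).2 fun x hx ↦ ?_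
    obtain ⟨_, hy, hxy⟩ := Group.mem_conjugatesOfSet_iff.1 hx
    obtain ⟨g, rfl⟩ := isConj_iff.1 hxy
    rw [Set.mem_singleton_iff.1 hy]
    change f (g * invol * g⁻¹) = 0
    rw [hf, hf, hfc, hf.map_inv, rep_mul_apply, map_neg, (hZ.1 (hZrep g⁻¹ _ (hfZ g))).2, map_neg,
      rep_apply_inv, map_zero, add_zero, add_neg_cancel]
  have hsum (g : FibGroup) : (Nat.card (FibGroup ⧸ core) : ZMod 5) • f g +
      τ g (∑ q : FibGroup ⧸ core, f q.out) = ∑ q : FibGroup ⧸ core, f q.out := by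
    refine Eq.trans ?_ (sum_mul_out (F := f) (fun x h hh ↦ ?_) g)
    · simp only [hf g, Finset.sum_add_distrib, map_sum]
      rw [Finset.sum_const, Finset.card_univ, Nat.card_eq_fintype_card, Nat.cast_smul_eq_nsmul]
    · rw [hf, show f h = 0 from hfK (core_le hh), map_zero, add_zero]
  set s := ∑ q : FibGroup ⧸ core, f q.out with hs
  have hsZ : s ∈ Z := Z.sum_mem fun q _ ↦ hfZ _
  set N := (Nat.card (FibGroup ⧸ core) : ZMod 5)
  have hp := hZ.1 (Z.smul_mem (-N⁻¹) hsZ)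
  refine ⟨-N⁻¹ • s, hp.1, hp.2, fun i ↦ ?_⟩
  rw [← hfn, map_smul, ← smul_sub, ← inv_smul_smul₀ card_quotient_core_ne_zero (f (gen i)),
    eq_sub_of_add_eq (hsum (gen i)), neg_smul, ← smul_neg, neg_sub]

variable (τ)

/-- The vectors that are fixed by `core` modulo the vectors fixed by `core`. -/
def coreInvariantsTwo : Submodule (ZMod 5) Y where
  carrier := {y | ∀ h ∈ core, τ h y - y ∈ coreInvariants τ}
  add_mem' {x y} hx hy h hh := by
    rw [map_add, add_sub_add_comm]
    exact add_mem (hx h hh) (hy h hh)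
  zero_mem' h _ := by simp
  smul_mem' a y hy h hh := by
    rw [map_smul, ← smul_sub]
    exact Submodule.smul_mem _ _ (hy h hh)

/-- The symmetrisation of a representation under conjugation by `invol`. -/
def symmRep (g : FibGroup) : Module.End (ZMod 5) Y :=
  (3 : ZMod 5) • (τ g + τ (invol * g * invol))

variable {τ}

lemma symmRep_apply (g : FibGroup) (y : Y) :
    symmRep τ g y = (3 : ZMod 5) • (τ g y + τ (invol * g * invol) y) := rfl

lemma coreInvariants_le_two : coreInvariants τ ≤ coreInvariantsTwo τ := by
  intro y hy h hh
  rw [hy h hh, sub_self]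
  exact zero_mem _

lemma rep_mem_coreInvariantsTwo {y : Y} (hy : y ∈ coreInvariantsTwo τ) (g : FibGroup) :
    τ g y ∈ coreInvariantsTwo τ := by
  intro h hh
  have h' := rep_mem_coreInvariants (hy _ (Subgroup.Normal.conj_mem inferInstance h hh g⁻¹)) g
  rwa [map_sub, ← rep_mul_apply, inv_inv, ← mul_assoc, ← mul_assoc, mul_inv_cancel, one_mul,
    rep_mul_apply] at h'

lemma symmRep_mem_coreInvariantsTwo {y : Y} (hy : y ∈ coreInvariantsTwo τ) (g : FibGroup) :
    symmRep τ g y ∈ coreInvariantsTwo τ :=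
  Submodule.smul_mem _ _
    (add_mem (rep_mem_coreInvariantsTwo hy _) (rep_mem_coreInvariantsTwo hy _))

lemma rep_mul_of_mem_coreInvariantsTwo {y : Y} (hy : y ∈ coreInvariantsTwo τ) {h h' : FibGroup}
    (hh : h ∈ core) (hh' : h' ∈ core) : τ (h * h') y = τ h y + τ h' y - y := by
  have e := hy h' hh' h hh
  rw [map_sub, ← rep_mul_apply, sub_eq_iff_eq_add] at e
  rw [e]
  abel

lemma symmRep_of_mem_coreInvariants {y : Y} (hy : y ∈ coreInvariants τ) (g : FibGroup) :
    symmRep τ g y = τ g y := by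
  rw [symmRep_apply, rep_conj_of_mem_coreInvariants hy, three_smul_add_self]

lemma symmRep_of_mem_core {y : Y} (hy : y ∈ coreInvariantsTwo τ) {h : FibGroup} (hh : h ∈ core) :
    symmRep τ h y = y := by
  have hconj {x : FibGroup} (hx : x ∈ core) : invol * x * invol ∈ core := by
    simpa only [invol_inv] using Subgroup.Normal.conj_mem inferInstance x hx invol
  have cancel (x : FibGroup) : invol * (invol * x) = x := by
    rw [← mul_assoc, invol_mul_self, one_mul]
  have hinv {x : FibGroup} (hx : x ∈ core) : τ x⁻¹ y = y + y - τ x y := by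
    have e := rep_mul_of_mem_coreInvariantsTwo hy hx (inv_mem hx)
    rw [mul_inv_cancel, map_one, Module.End.one_apply, eq_sub_iff_add_eq] at e
    rw [e, add_sub_cancel_left]
  let S : Subgroup FibGroup :=
    { carrier := {x | x ∈ core ∧ τ x y + τ (invol * x * invol) y = y + y}
      one_mem' := ⟨core.one_mem, by simp [invol_mul_self]⟩
      mul_mem' := by
        rintro a b ⟨ha, ha'⟩ ⟨hb, hb'⟩
        refine ⟨mul_mem ha hb, ?_⟩
        rw [show invol * (a * b) * invol = (invol * a * invol) * (invol * b * invol) by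
            simp only [mul_assoc, cancel],
          rep_mul_of_mem_coreInvariantsTwo hy ha hb,
          rep_mul_of_mem_coreInvariantsTwo hy (hconj ha) (hconj hb)]
        linear_combination (norm := module) ha' + hb'
      inv_mem' := by
        rintro a ⟨ha, ha'⟩
        refine ⟨inv_mem ha, ?_⟩
        rw [show invol * a⁻¹ * invol = (invol * a * invol)⁻¹ by
            simp only [mul_inv_rev, invol_inv, mul_assoc], hinv ha, hinv (hconj ha)]
        linear_combination (norm := module) -ha' }
  have hS : core ≤ S := by
    refine core_le_of_comm_mem (fun x hx ↦ hx.1) ?_ ?_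
    · rintro x ⟨hx, hx'⟩
      refine ⟨hconj hx, ?_⟩
      rw [show invol * (invol * x * invol) * invol = x by
        simp only [mul_assoc, cancel, invol_mul_self, mul_one], add_comm, hx']
    · intro g
      have hg := invol_mul_conj_mem_core g
      refine ⟨hg, ?_⟩
      rw [show invol * (invol * (g * invol * g⁻¹)) * invol = (invol * (g * invol * g⁻¹))⁻¹ by
        simp only [mul_inv_rev, invol_inv, inv_inv, mul_assoc, cancel], hinv hg]
      abel
  rw [symmRep_apply, (hS hh).2, three_smul_add_self]

lemma symmRep_mul {y : Y} (hy : y ∈ coreInvariantsTwo τ) (g g' : FibGroup) :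
    symmRep τ (g * g') y = symmRep τ g (symmRep τ g' y) := by
  have cancel (x : FibGroup) : invol * (invol * x) = x := by
    rw [← mul_assoc, invol_mul_self, one_mul]
  have hz := rep_mem_coreInvariantsTwo hy g'
  set z := τ g' y with hzdef
  obtain ⟨h, hh, e₁⟩ : ∃ h ∈ core, τ (invol * g' * invol) y = τ h z :=
    ⟨_, conj_invol_mul_inv_mem_core g', by rw [hzdef, ← rep_mul_apply, inv_mul_cancel_right]⟩
  obtain ⟨k, hk, e₂⟩ : ∃ k ∈ core, ∀ x, τ (invol * g * invol) x = τ g (τ k x) :=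
    ⟨_, inv_mul_conj_invol_mem_core g, fun x ↦ by
      rw [← rep_mul_apply, mul_inv_cancel_left]⟩
  have e₃ : τ (invol * (g * g') * invol) y = τ g (τ k (τ h z)) := by
    rw [← e₂, ← e₁, ← rep_mul_apply]
    simp only [mul_assoc, cancel]
  have e₄ : τ k (τ h z) = τ k z + τ h z - z := by
    rw [← rep_mul_apply, rep_mul_of_mem_coreInvariantsTwo hz hk hh]
  simp only [symmRep_apply, map_smul, map_add, e₁, e₂, e₃, e₄, map_sub, rep_mul_apply]
  rw [← hzdef]
  match_scalars <;> decide

lemma exists_symmRep_projection [Finite FibGroup] (τ : FibGroup →* Module.End (ZMod 5) Y) :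
    ∃ π : Y →ₗ[ZMod 5] Y, (∀ y, π y ∈ coreInvariants τ) ∧ (∀ y ∈ coreInvariants τ, π y = y) ∧
      ∀ g, ∀ y ∈ coreInvariantsTwo τ, π (symmRep τ g y) = τ g (π y) := by
  have : Fintype (FibGroup ⧸ core) := Fintype.ofFinite _
  obtain ⟨π₀, hπ₀⟩ := (coreInvariants τ).subtype.exists_leftInverse_of_injective
    (Submodule.ker_subtype _)
  replace hπ₀ {y : Y} (hy : y ∈ coreInvariants τ) : (π₀ y : Y) = y :=
    congrArg Subtype.val (LinearMap.congr_fun hπ₀ ⟨y, hy⟩)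
  set N := (Nat.card (FibGroup ⧸ core) : ZMod 5) with hN
  let F (y : Y) (g : FibGroup) : Y := τ g (π₀ (symmRep τ g⁻¹ y))
  have hF {y : Y} (hy : y ∈ coreInvariantsTwo τ) (g : FibGroup) (h : FibGroup) (hh : h ∈ core) :
      F y (g * h) = F y g := by
    simp only [F]
    rw [mul_inv_rev, symmRep_mul hy, symmRep_of_mem_core (symmRep_mem_coreInvariantsTwo hy _)
      (inv_mem hh), rep_mul_apply, (π₀ _).2 h hh]
  let π : Y →ₗ[ZMod 5] Y := N⁻¹ • ∑ q : FibGroup ⧸ core,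
    τ q.out ∘ₗ (coreInvariants τ).subtype ∘ₗ π₀ ∘ₗ symmRep τ q.out⁻¹
  have hπ (y : Y) : π y = N⁻¹ • ∑ q : FibGroup ⧸ core, F y q.out := by
    simp [π, F]
  refine ⟨π, fun y ↦ ?_, fun y hy ↦ ?_, fun g y hy ↦ ?_⟩
  · rw [hπ]
    exact Submodule.smul_mem _ _ (sum_mem fun q _ ↦ rep_mem_coreInvariants (π₀ _).2 _)
  · have h (g : FibGroup) : F y g = y := by
      simp only [F]
      rw [symmRep_of_mem_coreInvariants hy, hπ₀ (rep_mem_coreInvariants hy _), rep_apply_inv]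
    simp only [hπ, h]
    rw [Finset.sum_const, Finset.card_univ, ← Nat.card_eq_fintype_card,
      ← Nat.cast_smul_eq_nsmul (ZMod 5), inv_smul_smul₀ card_quotient_core_ne_zero]
  · rw [hπ, hπ, map_smul, ← sum_mul_out (hF hy) g⁻¹, map_sum]
    congr 1
    refine Finset.sum_congr rfl fun q _ ↦ ?_
    simp only [F]
    rw [← symmRep_mul hy, rep_mul_apply, rep_apply_inv, mul_inv_rev, inv_inv]

/-- The representation on the quotient by an invariant submodule. -/
def quotientRep (τ : FibGroup →* Module.End (ZMod 5) Y) (F : Submodule (ZMod 5) Y)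
    (hF : ∀ g, ∀ y ∈ F, τ g y ∈ F) : FibGroup →* Module.End (ZMod 5) (Y ⧸ F) where
  toFun g := F.mapQ F (τ g) (hF g)
  map_one' := by
    ext y
    simp
  map_mul' g h := by
    ext y
    simp

@[simp]
lemma quotientRep_mkQ (F : Submodule (ZMod 5) Y) (hF : ∀ g, ∀ y ∈ F, τ g y ∈ F) (g : FibGroup)
    (y : Y) : quotientRep τ F hF g (F.mkQ y) = F.mkQ (τ g y) := rfl

lemma relMap_quotientRep (F : Submodule (ZMod 5) Y) (hF : ∀ g, ∀ y ∈ F, τ g y ∈ F)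
    (m : ZMod 9 → Y) (i : ZMod 9) :
    relMap (quotientRep τ F hF) (fun i ↦ F.mkQ (m i)) i = F.mkQ (relMap τ m i) := rfl

lemma mkQ_mem_coreInvariants {F : Submodule (ZMod 5) Y} {hF : ∀ g, ∀ y ∈ F, τ g y ∈ F} {y : Y} :
    F.mkQ y ∈ coreInvariants (quotientRep τ F hF) ↔ ∀ h ∈ core, τ h y - y ∈ F := by
  refine forall₂_congr fun h _ ↦ ?_
  rw [quotientRep_mkQ, Submodule.mkQ_apply, Submodule.mkQ_apply, Submodule.Quotient.eq]

/-- The obstruction against lifting a relation through one layer of the `core`-socle series lies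
in the image of the odd vectors, after antisymmetrisation. -/
lemma exists_relMap_eq_sub_of_odd [Finite FibGroup] {m : ZMod 9 → Y}
    (hm : ∀ i, m i ∈ coreInvariantsTwo τ) (hodd : ∀ i, τ invol (m i) = -m i)
    (hR : ∀ i, relMap τ m i ∈ coreInvariants τ) :
    ∃ n : ZMod 9 → Y, (∀ i, n i ∈ coreInvariants τ ∧ τ invol (n i) = -n i) ∧
      ∀ i, relMap τ n i = relMap τ m i - τ invol (relMap τ m i) := by
  obtain ⟨π, hπ, hπI, hπτ⟩ := exists_symmRep_projection τ
  have key (i : ZMod 9) : relMap τ m i - τ invol (relMap τ m i) =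
      relMap τ (fun j ↦ π (m j)) i + relMap τ (fun j ↦ π (m j)) i := by
    have e : relMap τ m i - τ invol (relMap τ m i) =
        (2 : ZMod 5) • (m i + symmRep τ (gen i) (m (i + 1)) - m (i + 2)) := by
      have h : τ (invol * gen i * invol) (m (i + 1)) = -τ invol (τ (gen i) (m (i + 1))) := by
        rw [rep_mul_apply, rep_mul_apply, hodd, map_neg, map_neg]
      simp only [relMap_apply, symmRep_apply, map_add, map_sub, hodd, h]
      match_scalars <;> decide
    have hmem : relMap τ m i - τ invol (relMap τ m i) ∈ coreInvariants τ :=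
      sub_mem (hR i) (rep_mem_coreInvariants (hR i) _)
    rw [← hπI _ hmem, e, map_smul, map_sub, map_add, hπτ _ _ (hm _), two_smul]
    rfl
  refine ⟨fun j ↦ π (m j) - τ invol (π (m j)), fun i ↦
    ⟨sub_mem (hπ _) (rep_mem_coreInvariants (hπ _) _), ?_⟩, fun i ↦ ?_⟩
  · rw [map_sub, rep_invol_rep_invol, neg_sub]
  · have h₁ := key i
    have h₂ := congrArg (τ invol) h₁
    rw [map_sub, rep_invol_rep_invol, map_add, ← relMap_rep_invol (fun j ↦ hπ _)] at h₂
    have h₃ : relMap τ (fun j ↦ π (m j) - τ invol (π (m j))) =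
        relMap τ (fun j ↦ π (m j)) - relMap τ (fun j ↦ τ invol (π (m j))) := by
      rw [← map_sub]
      rfl
    rw [h₃, Pi.sub_apply]
    rw [← sub_eq_zero]
    refine eq_zero_of_add_self ?_
    linear_combination (norm := module) h₂ - h₁

/-- The general case of `exists_relMap_eq_sub_of_odd`. -/
lemma exists_relMap_eq_sub [Finite FibGroup] {m : ZMod 9 → Y}
    (hm : ∀ i, m i ∈ coreInvariantsTwo τ) (hR : ∀ i, relMap τ m i ∈ coreInvariants τ) :
    ∃ n : ZMod 9 → Y, (∀ i, n i ∈ coreInvariants τ ∧ τ invol (n i) = -n i) ∧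
      ∀ i, relMap τ n i = relMap τ m i - τ invol (relMap τ m i) := by
  set I := coreInvariants τ with hI
  set σ := quotientRep τ I (fun g _ hy ↦ rep_mem_coreInvariants hy g) with hσ
  have hmk (i : ZMod 9) : I.mkQ (m i) ∈ coreInvariants σ := mkQ_mem_coreInvariants.2 (hm i)
  obtain ⟨p', hp', hp'c, hp'm⟩ := exists_eq_sub_self (τ := σ)
    (n := fun i ↦ I.mkQ (m i) + σ invol (I.mkQ (m i)))
    (fun i ↦ add_mem (hmk i) (rep_mem_coreInvariants (hmk i) _))
    (fun i ↦ by rw [map_add, rep_invol_rep_invol, add_comm]) (by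
      have h₁ : relMap σ (fun i ↦ I.mkQ (m i)) = 0 := by
        ext1 i
        rw [hσ, relMap_quotientRep, Submodule.mkQ_apply, (Submodule.Quotient.mk_eq_zero _).2 (hR i),
          Pi.zero_apply]
      have h₂ : (fun i ↦ I.mkQ (m i) + σ invol (I.mkQ (m i))) =
        (fun i ↦ I.mkQ (m i)) + fun i ↦ σ invol (I.mkQ (m i)) := rfl
      ext1 i
      rw [h₂, map_add, Pi.add_apply, relMap_rep_invol hmk, h₁, Pi.zero_apply, map_zero, add_zero])
  obtain ⟨p, rfl⟩ := I.mkQ_surjective p'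
  have hp : p ∈ coreInvariantsTwo τ := mkQ_mem_coreInvariants.1 hp'
  set m' : ZMod 9 → Y := m - (3 : ZMod 5) • fun i ↦ τ (gen i) p - p with hm'
  have hm'2 (i : ZMod 9) : m' i ∈ coreInvariantsTwo τ :=
    sub_mem (hm i) (Submodule.smul_mem _ _ (sub_mem (rep_mem_coreInvariantsTwo hp _) hp))
  have hRm' : relMap τ m' = relMap τ m := by
    rw [hm', map_sub, map_smul, relMap_sub_self, smul_zero, sub_zero]
  set ι : ZMod 9 → Y := fun i ↦ (3 : ZMod 5) • (m' i + τ invol (m' i)) with hι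
  have hιI (i : ZMod 9) : ι i ∈ I := by
    refine Submodule.smul_mem _ _ ?_
    have h := hp'm i
    rw [← Submodule.Quotient.mk_eq_zero, ← Submodule.mkQ_apply, map_add, ← quotientRep_mkQ I
      (fun g _ hy ↦ rep_mem_coreInvariants hy g), ← hσ, hm']
    simp only [Pi.sub_apply, Pi.smul_apply, map_sub, map_smul, ← quotientRep_mkQ I
      (fun g _ hy ↦ rep_mem_coreInvariants hy g)]
    rw [← hσ, rep_invol_comm hp', hp'c]
    linear_combination (norm := skip) h
    match_scalars <;> decide
  have hιc : (fun i ↦ τ invol (ι i)) = ι := by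
    ext1 i
    rw [hι, map_smul, map_add, rep_invol_rep_invol, add_comm]
  have hRι : ∀ i, τ invol (relMap τ ι i) = relMap τ ι i := fun i ↦ by
    rw [← relMap_rep_invol hιI, hιc]
  have hRsub (i : ZMod 9) : relMap τ (m' - ι) i = relMap τ m i - relMap τ ι i := by
    rw [map_sub, hRm', Pi.sub_apply]
  obtain ⟨n, hn, hn'⟩ := exists_relMap_eq_sub_of_odd (m := m' - ι)
    (fun i ↦ sub_mem (hm'2 i) (coreInvariants_le_two (hιI i)))
    (fun i ↦ by
      rw [Pi.sub_apply, map_sub, congrFun hιc i, hι]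
      match_scalars <;> decide)
    (fun i ↦ by
      rw [hRsub]
      exact sub_mem (hR i) (relMap_mem_coreInvariants hιI i))
  refine ⟨n, hn, fun i ↦ ?_⟩
  rw [hn', hRsub, map_sub, hRι]
  abel

end FibGroup

namespace Submodule

variable {K V W : Type*} [Field K] [AddCommGroup V] [Module K V] [AddCommGroup W] [Module K W]

lemma finrank_map_add_finrank_inf_ker [Module.Finite K V] (P : Submodule K V) (f : V →ₗ[K] W) :
    Module.finrank K (P.map f) + Module.finrank K (P ⊓ LinearMap.ker f : Submodule K V) =
      Module.finrank K P := by
  rw [← (f.domRestrict P).finrank_range_add_finrank_ker, LinearMap.range_domRestrict,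
    LinearMap.ker_domRestrict, ← P.map_comap_subtype, finrank_map_subtype_eq]

lemma finrank_le_finrank_map_add [Module.Finite K V] {P N : Submodule K V} (f : V →ₗ[K] W)
    (hN : P ⊓ LinearMap.ker f ≤ N) :
    Module.finrank K P ≤ Module.finrank K (P.map f) + Module.finrank K N := by
  rw [← finrank_map_add_finrank_inf_ker P f]
  exact Nat.add_le_add_left (finrank_mono hN) _

lemma finrank_comap_mkQ [Module.Finite K V] (F : Submodule K V) (P : Submodule K (V ⧸ F)) :
    Module.finrank K (P.comap F.mkQ) = Module.finrank K P + Module.finrank K F := by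
  rw [← finrank_map_add_finrank_inf_ker (P.comap F.mkQ) F.mkQ, ker_mkQ,
    map_comap_eq_of_surjective F.mkQ_surjective, inf_eq_right.2]
  exact le_comap_mkQ F P

/-- The families of nine vectors in a submodule. -/
def powNine (P : Submodule K V) : Submodule K (ZMod 9 → V) := pi Set.univ fun _ ↦ P

@[simp]
lemma mem_powNine {P : Submodule K V} {m : ZMod 9 → V} : m ∈ P.powNine ↔ ∀ i, m i ∈ P := by
  simp [powNine]

lemma finrank_powNine [Module.Finite K V] (P : Submodule K V) :
    Module.finrank K P.powNine = 9 * Module.finrank K P := by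
  have h : P.powNine = LinearMap.range (P.subtype.compLeft (ZMod 9)) := by
    ext m
    refine mem_powNine.trans ⟨fun h ↦ ⟨fun i ↦ ⟨m i, h i⟩, rfl⟩, ?_⟩
    rintro ⟨n, rfl⟩ i
    exact (n i).2
  rw [h, LinearMap.finrank_range_of_inj, Module.finrank_pi_fintype, Finset.sum_const,
    Finset.card_univ, ZMod.card, smul_eq_mul]
  exact P.injective_subtype.comp_left

end Submodule

open FibGroup Module

/-- A representation of `FibGroup` with a compatible action of the functions on the quotient
by `core`. -/
structure BlockRep (Y : Type*) [AddCommGroup Y] [Module (ZMod 5) Y] where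
  /-- The action of the group. -/
  τ : FibGroup →* Module.End (ZMod 5) Y
  /-- The action of the functions. -/
  act : (FibGroup ⧸ core → ZMod 5) →ₐ[ZMod 5] Module.End (ZMod 5) Y
  τ_act (g : FibGroup) (f : FibGroup ⧸ core → ZMod 5) (y : Y) :
    τ g (act f y) = act (fun q ↦ f (q * (g : FibGroup))) (τ g y)

namespace BlockRep

variable {Y : Type*} [AddCommGroup Y] [Module (ZMod 5) Y] (B : BlockRep Y)

lemma act_mul_apply (f f' : FibGroup ⧸ core → ZMod 5) (y : Y) :
    B.act (f * f') y = B.act f (B.act f' y) := by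
  rw [map_mul, Module.End.mul_apply]

/-- The submodule is invariant under the group and the functions. -/
structure Stable (F : Submodule (ZMod 5) Y) : Prop where
  τ_mem : ∀ g, ∀ y ∈ F, B.τ g y ∈ F
  act_mem : ∀ f, ∀ y ∈ F, B.act f y ∈ F

variable {B} in
/-- The quotient by an invariant submodule. -/
def quotient {F : Submodule (ZMod 5) Y} (hF : B.Stable F) : BlockRep (Y ⧸ F) where
  τ := quotientRep B.τ F hF.τ_mem
  act :=
    { toFun f := F.mapQ F (B.act f) (hF.act_mem f)
      map_one' := by ext y; simp
      map_mul' f f' := by ext y; simp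
      map_zero' := by ext y; simp
      map_add' f f' := by ext y; simp
      commutes' r := by ext y; simp [Algebra.algebraMap_eq_smul_one] }
  τ_act g f y := by
    obtain ⟨y, rfl⟩ := F.mkQ_surjective y
    exact congrArg F.mkQ (B.τ_act g f y)

/-- The vectors fixed by `core`. -/
def I : Submodule (ZMod 5) Y := coreInvariants B.τ

/-- The vectors fixed by the group. -/
def J : Submodule (ZMod 5) Y where
  carrier := {y | ∀ g, B.τ g y = y}
  add_mem' {x y} hx hy g := by rw [map_add, hx g, hy g]
  zero_mem' h := map_zero _
  smul_mem' a y hy g := by rw [map_smul, hy g]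

/-- The part of a submodule on which `invol` acts by `-1`. -/
def odd (P : Submodule (ZMod 5) Y) : Submodule (ZMod 5) Y := P ⊓ LinearMap.ker (B.τ invol + 1)

lemma J_le_I : B.J ≤ B.I := fun _ hy h _ ↦ hy h

variable {B}

lemma mem_odd {P : Submodule (ZMod 5) Y} {y : Y} :
    y ∈ B.odd P ↔ y ∈ P ∧ B.τ invol y = -y := by
  simp [odd, eq_neg_iff_add_eq_zero]

lemma mem_J_of_gen {y : Y} (h : ∀ i, B.τ (gen i) y = y) : y ∈ B.J := by
  let S : Subgroup FibGroup :=
    { carrier := {g | B.τ g y = y}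
      one_mem' := by simp
      mul_mem' := fun {g g'} (hg : B.τ g y = y) (hg' : B.τ g' y = y) ↦
        show B.τ (g * g') y = y by rw [rep_mul_apply, hg', hg]
      inv_mem' := fun {g} (hg : B.τ g y = y) ↦ show B.τ g⁻¹ y = y by
        conv_lhs => rw [← hg, rep_inv_apply] }
  exact fun g ↦ mem_of_gen_mem (S := S) h g

lemma act_mem_I {y : Y} (hy : y ∈ B.I) (f : FibGroup ⧸ core → ZMod 5) : B.act f y ∈ B.I := by
  intro h hh
  rw [B.τ_act, hy h hh, (QuotientGroup.eq_one_iff h).2 hh]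
  simp only [mul_one]

lemma odd_I_inf_J : B.odd B.I ⊓ B.J = ⊥ := by
  refine (Submodule.eq_bot_iff _).2 fun y hy ↦ eq_zero_of_add_self ?_
  have h := (mem_odd.1 hy.1).2
  rwa [hy.2 invol, eq_neg_iff_add_eq_zero] at h

lemma map_one_sub_eq_odd {P : Submodule (ZMod 5) Y} (hP : ∀ y ∈ P, B.τ invol y ∈ P) :
    P.map (1 - B.τ invol) = B.odd P := by
  ext y
  rw [mem_odd]
  constructor
  · rintro ⟨x, hx, rfl⟩
    refine ⟨sub_mem hx (hP x hx), ?_⟩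
    change B.τ invol (x - B.τ invol x) = -(x - B.τ invol x)
    rw [map_sub, rep_invol_rep_invol, neg_sub]
  · rintro ⟨hy, hc⟩
    refine ⟨(3 : ZMod 5) • y, P.smul_mem _ hy, ?_⟩
    change (3 : ZMod 5) • y - B.τ invol ((3 : ZMod 5) • y) = y
    rw [map_smul, hc, smul_neg, sub_neg_eq_add, ← smul_add, three_smul_add_self]

lemma finrank_odd_add [Module.Finite (ZMod 5) Y] {P : Submodule (ZMod 5) Y}
    (hP : ∀ y ∈ P, B.τ invol y ∈ P) :
    finrank (ZMod 5) (B.odd P) +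
      finrank (ZMod 5) (P ⊓ LinearMap.ker (1 - B.τ invol) : Submodule (ZMod 5) Y) =
        finrank (ZMod 5) P := by
  rw [← map_one_sub_eq_odd hP]
  exact Submodule.finrank_map_add_finrank_inf_ker P _

lemma two_mul_finrank_odd [Module.Finite (ZMod 5) Y] {P : Submodule (ZMod 5) Y}
    (hP : ∀ y ∈ P, B.τ invol y ∈ P) (hact : ∀ f, ∀ y ∈ P, B.act f y ∈ P) :
    2 * finrank (ZMod 5) (B.odd P) = finrank (ZMod 5) P := by
  obtain ⟨s, hss, hsc⟩ := exists_sign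
  have hs (y : Y) : B.act s (B.act s y) = y := by
    rw [← act_mul_apply, hss, map_one, Module.End.one_apply]
  have hinj : Function.Injective (B.act s) := Function.LeftInverse.injective hs
  have hsτ (y : Y) : B.τ invol (B.act s y) = -B.act s (B.τ invol y) := by
    rw [B.τ_act, hsc, map_neg, LinearMap.neg_apply]
  have h₁ : finrank (ZMod 5) (B.odd P) ≤
      finrank (ZMod 5) (P ⊓ LinearMap.ker (1 - B.τ invol) : Submodule (ZMod 5) Y) := by
    rw [(Submodule.equivMapOfInjective _ hinj _).finrank_eq]
    refine Submodule.finrank_mono ?_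
    rintro _ ⟨y, hy, rfl⟩
    rw [SetLike.mem_coe, mem_odd] at hy
    refine ⟨hact s y hy.1, ?_⟩
    simp [hsτ, hy.2]
  have h₂ : finrank (ZMod 5) (P ⊓ LinearMap.ker (1 - B.τ invol) : Submodule (ZMod 5) Y) ≤
      finrank (ZMod 5) (B.odd P) := by
    rw [(Submodule.equivMapOfInjective _ hinj _).finrank_eq]
    refine Submodule.finrank_mono ?_
    rintro _ ⟨y, hy, rfl⟩
    have hy' : B.τ invol y = y := by
      have h : y - B.τ invol y = 0 := hy.2
      exact (sub_eq_zero.1 h).symm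
    exact mem_odd.2 ⟨hact s y hy.1, by rw [hsτ, hy']⟩
  have := finrank_odd_add hP
  omega

open Classical in
lemma sum_single_eq_one [Fintype (FibGroup ⧸ core)] :
    ∑ q : FibGroup ⧸ core, (Pi.single q 1 : FibGroup ⧸ core → ZMod 5) = 1 :=
  Finset.univ_sum_single (1 : FibGroup ⧸ core → ZMod 5)

open Classical in
lemma eq_zero_of_act_single [Finite FibGroup] {y : Y}
    (hy : ∀ q : FibGroup ⧸ core, B.act (Pi.single q 1) y = 0) : y = 0 := by
  have : Fintype (FibGroup ⧸ core) := Fintype.ofFinite _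
  have h : B.act (∑ q : FibGroup ⧸ core, Pi.single q 1) y = 0 := by
    rw [map_sum, LinearMap.sum_apply, Finset.sum_eq_zero fun q _ ↦ hy q]
  rwa [sum_single_eq_one, map_one, Module.End.one_apply] at h

open Classical in
lemma single_mul_comp (q : FibGroup ⧸ core) (g : FibGroup) :
    (fun r : FibGroup ⧸ core ↦ (Pi.single q 1 : FibGroup ⧸ core → ZMod 5) (r * (g : FibGroup))) =
      Pi.single (q * (g : FibGroup ⧸ core)⁻¹) 1 := by
  ext r
  simp only [Pi.single_apply, eq_mul_inv_iff_mul_eq]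

open Classical in
/-- Linear relations between invariant vectors with functions as coefficients hold pointwise. -/
lemma sum_smul_eq_zero_of_sum_act [Finite FibGroup] {ι : Type*} [Fintype ι] {w : ι → Y}
    (hw : ∀ j, w j ∈ B.J) {f : ι → FibGroup ⧸ core → ZMod 5}
    (h : ∑ j, B.act (f j) (w j) = 0) (q : FibGroup ⧸ core) : ∑ j, f j q • w j = 0 := by
  have hq : B.act (Pi.single q 1) (∑ j, f j q • w j) = 0 := by
    rw [← map_zero (B.act (Pi.single q 1)), ← h, map_sum, map_sum]
    refine Finset.sum_congr rfl fun j _ ↦ ?_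
    rw [← act_mul_apply, map_smul, ← LinearMap.smul_apply, ← map_smul]
    congr 2
    ext r
    by_cases hr : r = q <;> simp [hr]
  refine eq_zero_of_act_single (B := B) fun r ↦ ?_
  obtain ⟨g, hg⟩ := QuotientGroup.mk_surjective (r⁻¹ * q)
  have e := congrArg (B.τ g) hq
  rwa [B.τ_act, single_mul_comp, hg, map_zero, (B.J.sum_mem fun j _ ↦
    B.J.smul_mem _ (hw j) : ∑ j, f j q • w j ∈ B.J) g, mul_inv_rev, inv_inv,
    mul_inv_cancel_left] at e

lemma sum_out_mem_J [Fintype (FibGroup ⧸ core)] {y : Y} (hy : y ∈ B.I) :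
    ∑ r : FibGroup ⧸ core, B.τ r.out y ∈ B.J := by
  intro g
  rw [map_sum]
  simp only [← rep_mul_apply]
  exact sum_mul_out (F := fun x ↦ B.τ x y) (fun x h hh ↦ by rw [rep_mul_apply, hy h hh]) g

open Classical in
lemma finrank_I_le [Finite FibGroup] [Module.Finite (ZMod 5) Y] :
    finrank (ZMod 5) B.I ≤ 152 * finrank (ZMod 5) B.J := by
  have : Fintype (FibGroup ⧸ core) := Fintype.ofFinite _
  let Φ : B.I →ₗ[ZMod 5] (FibGroup ⧸ core → B.J) := LinearMap.pi fun q ↦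
    LinearMap.codRestrict B.J
      ((∑ r : FibGroup ⧸ core, B.τ r.out) ∘ₗ B.act (Pi.single q 1) ∘ₗ B.I.subtype) fun y ↦ by
        simpa using sum_out_mem_J (act_mem_I y.2 _)
  have hΦ (y : B.I) (q : FibGroup ⧸ core) :
      (Φ y q : Y) = ∑ r : FibGroup ⧸ core, B.τ r.out (B.act (Pi.single q 1) y) := by
    simp [Φ]
  have hinj : Function.Injective Φ := by
    refine (injective_iff_map_eq_zero Φ).2 fun y hy ↦ Subtype.ext ?_
    refine eq_zero_of_act_single (B := B) fun q ↦ ?_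
    have h := hΦ y q
    rw [hy] at h
    have h' := congrArg (B.act (Pi.single q 1)) h
    rw [map_sum, Finset.sum_eq_single 1] at h'
    · rw [(act_mem_I y.2 _ : B.act (Pi.single q 1) (y : Y) ∈ coreInvariants B.τ) _
        ((QuotientGroup.eq_one_iff _).1 (QuotientGroup.out_eq' _)), ← act_mul_apply,
        ← Pi.single_mul, one_mul] at h'
      rw [← h']
      simp
    · intro r _ hr
      rw [B.τ_act, single_mul_comp, QuotientGroup.out_eq', ← act_mul_apply,
        show (Pi.single q 1 * Pi.single (q * r⁻¹) 1 : FibGroup ⧸ core → ZMod 5) = 0 from ?_,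
        map_zero, LinearMap.zero_apply]
      ext x
      by_cases hx : x = q
      · subst hx
        simp [hr]
      · simp [hx]
    · simp
  have h := LinearMap.finrank_le_finrank_of_injective hinj
  rw [finrank_pi_fintype, Finset.sum_const, Finset.card_univ, ← Nat.card_eq_fintype_card,
    smul_eq_mul] at h
  exact h.trans (Nat.mul_le_mul_right _ index_core_le)

/-- The functions on the quotient by `core` given by the coordinates of `cocycle`. -/
noncomputable def cocycleCoord (g : FibGroup) (j : Fin 2 × Fin 9) : FibGroup ⧸ core → ZMod 5 :=
  fun q ↦ quotRep q (cocycle g) j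

lemma cocycleCoord_mul (g h : FibGroup) (j : Fin 2 × Fin 9) : cocycleCoord (g * h) j =
    cocycleCoord g j + fun q ↦ cocycleCoord h j (q * (g : FibGroup)) := by
  ext q
  simp only [cocycleCoord, Pi.add_apply]
  rw [isCocycle_cocycle, map_add, Pi.add_apply, map_mul, Module.End.mul_apply, quotRep_mk]

lemma isCocycle_sum_act {w : Fin 2 × Fin 9 → Y} (hw : ∀ j, w j ∈ B.J) :
    IsCocycle B.τ fun g ↦ ∑ j, B.act (cocycleCoord g j) (w j) := by
  intro g h
  simp only
  rw [map_sum, ← Finset.sum_add_distrib]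
  refine Finset.sum_congr rfl fun j _ ↦ ?_
  rw [cocycleCoord_mul, map_add, LinearMap.add_apply, B.τ_act, hw j g]

lemma sum_act_mem_odd {w : Fin 2 × Fin 9 → Y} (hw : ∀ j, w j ∈ B.J) (g : FibGroup) :
    ∑ j, B.act (cocycleCoord g j) (w j) ∈ B.odd B.I := by
  refine sum_mem fun j _ ↦ mem_odd.2 ⟨act_mem_I (B.J_le_I (hw j)) _, ?_⟩
  rw [B.τ_act, hw j invol, ← LinearMap.neg_apply, ← map_neg]
  congr 2
  ext q
  rw [cocycleCoord, map_mul, Module.End.mul_apply, quotRep_mk, rep_invol_apply, map_neg]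
  rfl

lemma eq_zero_of_sum_act [Finite FibGroup] {w : Fin 2 × Fin 9 → Y} (hw : ∀ j, w j ∈ B.J)
    (h : ∀ x ∈ core, ∑ j, B.act (cocycleCoord x j) (w j) = 0) : w = 0 := by
  let P : Submodule (ZMod 5) (Fin 2 × Fin 9 → ZMod 5) :=
    { carrier := {v | ∀ g, ∑ j, rep g v j • w j = 0}
      add_mem' := fun {u v} hu hv g ↦ by
        simp [add_smul, Finset.sum_add_distrib, hu g, hv g]
      zero_mem' := fun g ↦ by simp
      smul_mem' := fun a v hv g ↦ by
        simp [mul_smul, ← Finset.smul_sum, hv g] }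
  have hP : P = ⊤ := by
    refine eq_top_of_cocycleVec_mem (fun g v hv x ↦ ?_) ?_
    · rw [← rep_mul_apply]
      exact hv _
    · have hmem : -(2 : ZMod 5) • cocycleVec 0 ∈ P := fun g ↦ by
        rw [← cocycle_gen, ← cocycle_comm_invol]
        exact sum_smul_eq_zero_of_sum_act hw (h _ (invol_mul_conj_mem_core _)) g
      rwa [Submodule.smul_mem_iff _ (by decide)] at hmem
  ext1 j
  have hj : (Pi.single j 1 : Fin 2 × Fin 9 → ZMod 5) ∈ P := hP ▸ Submodule.mem_top
  have := hj 1
  simpa [Pi.single_apply] using this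

/-- An upper bound for the rank of the relations on a space of `core`-invariants, coming from
the coboundaries and the explicit cocycles. -/
lemma finrank_map_relMap_le [Finite FibGroup] [Module.Finite (ZMod 5) Y]
    {P : Submodule (ZMod 5) Y} (hPI : P ≤ B.I) (hP : ∀ g, ∀ y ∈ P, B.τ g y ∈ P)
    (hodd : B.odd B.I ≤ P) :
    finrank (ZMod 5) (P.powNine.map (relMap B.τ)) + finrank (ZMod 5) P +
      18 * finrank (ZMod 5) B.J ≤
        9 * finrank (ZMod 5) P + finrank (ZMod 5) (P ⊓ B.J : Submodule (ZMod 5) Y) := by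
  let Θ : (P × (Fin 2 × Fin 9 → B.J)) →ₗ[ZMod 5] (ZMod 9 → Y) :=
    LinearMap.pi fun i ↦ LinearMap.coprod ((B.τ (gen i) - 1) ∘ₗ P.subtype)
      (∑ j, B.act (cocycleCoord (gen i) j) ∘ₗ B.J.subtype ∘ₗ LinearMap.proj j)
  have hΘ (x : P × (Fin 2 × Fin 9 → B.J)) (i : ZMod 9) : Θ x i = B.τ (gen i) x.1 - x.1 +
      ∑ j, B.act (cocycleCoord (gen i) j) (x.2 j) := by
    simp [Θ]
  have hrange : LinearMap.range Θ ≤ P.powNine ⊓ LinearMap.ker (relMap B.τ) := by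
    rintro _ ⟨x, rfl⟩
    have hc := isCocycle_sum_act (w := fun j ↦ (x.2 j : Y)) fun j ↦ (x.2 j).2
    refine ⟨Submodule.mem_powNine.2 fun i ↦ ?_, ?_⟩
    · rw [hΘ]
      exact add_mem (sub_mem (hP _ _ x.1.2) x.1.2)
        (hodd (sum_act_mem_odd (fun j ↦ (x.2 j).2) _))
    · rw [SetLike.mem_coe, LinearMap.mem_ker, show Θ x = (fun i ↦ B.τ (gen i) x.1 - x.1) +
        fun i ↦ ∑ j, B.act (cocycleCoord (gen i) j) (x.2 j) from funext (hΘ x), map_add,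
        relMap_sub_self, zero_add]
      ext i
      simp only [relMap_apply]
      rw [← hc, gen_mul, sub_self, Pi.zero_apply]
  have hker (x : P × (Fin 2 × Fin 9 → B.J)) (hx : Θ x = 0) : x.2 = 0 ∧ (x.1 : Y) ∈ B.J := by
    have hc := isCocycle_sum_act (w := fun j ↦ (x.2 j : Y)) fun j ↦ (x.2 j).2
    have hf : IsCocycle B.τ fun g ↦ B.τ g x.1 - x.1 +
        ∑ j, B.act (cocycleCoord g j) (x.2 j) := by
      intro g h
      have := hc g h
      simp only at this ⊢
      rw [this, map_add, map_sub, rep_mul_apply]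
      abel
    have hzero (g : FibGroup) : B.τ g x.1 - x.1 + ∑ j, B.act (cocycleCoord g j) (x.2 j) = 0 :=
      mem_of_gen_mem (S := hf.zeroSubgroup) (fun i ↦ by
        rw [hf.mem_zeroSubgroup, ← hΘ, hx, Pi.zero_apply]) g
    have hw : (fun j ↦ (x.2 j : Y)) = 0 := by
      refine eq_zero_of_sum_act (fun j ↦ (x.2 j).2) fun h hh ↦ ?_
      have := hzero h
      rwa [hPI x.1.2 h hh, sub_self, zero_add] at this
    refine ⟨funext fun j ↦ Subtype.ext (congrFun hw j), fun g ↦ ?_⟩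
    have := hzero g
    simp only [fun j ↦ congrFun hw j, Pi.zero_apply, map_zero, Finset.sum_const_zero,
      add_zero] at this
    exact sub_eq_zero.1 this
  have hkerle : finrank (ZMod 5) (LinearMap.ker Θ) ≤
      finrank (ZMod 5) (P ⊓ B.J : Submodule (ZMod 5) Y) := by
    let φ : LinearMap.ker Θ →ₗ[ZMod 5] (P ⊓ B.J : Submodule (ZMod 5) Y) :=
      LinearMap.codRestrict _ (P.subtype ∘ₗ LinearMap.fst _ _ _ ∘ₗ (LinearMap.ker Θ).subtype)
        fun x ↦ ⟨x.1.1.2, (hker _ x.2).2⟩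
    refine LinearMap.finrank_le_finrank_of_injective (f := φ) ?_
    intro x y hxy
    have hxy' : (φ x : Y) = φ y := by rw [hxy]
    refine Subtype.ext (Prod.ext (Subtype.ext hxy') ?_)
    rw [(hker _ x.2).1, (hker _ y.2).1]
  have h₁ := Θ.finrank_range_add_finrank_ker
  rw [finrank_prod, finrank_pi_fintype, Finset.sum_const, Finset.card_univ] at h₁
  have h₂ := Submodule.finrank_map_add_finrank_inf_ker P.powNine (relMap B.τ)
  rw [Submodule.finrank_powNine] at h₂
  have h₃ := Submodule.finrank_mono hrange
  simp only [Fintype.card_prod, Fintype.card_fin, smul_eq_mul] at h₁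
  omega

lemma finrank_map_relMap_I_le [Finite FibGroup] [Module.Finite (ZMod 5) Y] :
    finrank (ZMod 5) (B.I.powNine.map (relMap B.τ)) + 17 * finrank (ZMod 5) B.J ≤
      8 * finrank (ZMod 5) B.I := by
  have h := finrank_map_relMap_le (B := B) le_rfl (fun g y hy ↦ rep_mem_coreInvariants hy g)
    inf_le_left
  rw [inf_eq_right.2 B.J_le_I] at h
  omega

lemma two_mul_finrank_comap_le [Finite FibGroup] [Module.Finite (ZMod 5) Y] :
    2 * finrank (ZMod 5) (B.I.powNine ⊓ ((B.odd B.I).powNine.map (relMap B.τ)).comap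
      ((1 - B.τ invol).compLeft (ZMod 9)) : Submodule (ZMod 5) (ZMod 9 → Y)) +
        36 * finrank (ZMod 5) B.J ≤ 17 * finrank (ZMod 5) B.I := by
  have hτ : ∀ y ∈ B.I, B.τ invol y ∈ B.I := fun y hy ↦ rep_mem_coreInvariants hy _
  have h₁ := finrank_map_relMap_le (B := B) (P := B.odd B.I) inf_le_left (fun g y hy ↦ by
    rw [mem_odd] at hy ⊢
    refine ⟨rep_mem_coreInvariants hy.1 g, ?_⟩
    rw [rep_invol_comm hy.1, hy.2, map_neg]) le_rfl
  rw [odd_I_inf_J, finrank_bot] at h₁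
  have h₂ := finrank_odd_add hτ
  have h₃ := two_mul_finrank_odd hτ fun f y hy ↦ act_mem_I hy f
  set W := (B.odd B.I).powNine.map (relMap B.τ)
  have h₄ := Submodule.finrank_le_finrank_map_add
    (P := B.I.powNine ⊓ W.comap ((1 - B.τ invol).compLeft (ZMod 9)))
    (N := (B.I ⊓ LinearMap.ker (1 - B.τ invol)).powNine) ((1 - B.τ invol).compLeft (ZMod 9)) (by
      rintro m ⟨⟨hm, -⟩, hm'⟩
      exact Submodule.mem_powNine.2 fun i ↦ ⟨Submodule.mem_powNine.1 hm i, congrFun hm' i⟩)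
  rw [Submodule.finrank_powNine] at h₄
  have h₅ : finrank (ZMod 5) ((B.I.powNine ⊓ W.comap ((1 - B.τ invol).compLeft (ZMod 9))).map
      ((1 - B.τ invol).compLeft (ZMod 9))) ≤ finrank (ZMod 5) W :=
    Submodule.finrank_mono (Submodule.map_le_iff_le_comap.2 inf_le_right)
  omega

end BlockRep

namespace BlockRep

variable {Y : Type*} [AddCommGroup Y] [Module (ZMod 5) Y] (B : BlockRep Y)

/-- The vectors that are fixed by `core` modulo a submodule. -/
def fixedMod (F : Submodule (ZMod 5) Y) : Submodule (ZMod 5) Y where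
  carrier := {y | ∀ h ∈ core, B.τ h y - y ∈ F}
  add_mem' {x y} hx hy h hh := by
    rw [map_add, add_sub_add_comm]
    exact F.add_mem (hx h hh) (hy h hh)
  zero_mem' h _ := by simp
  smul_mem' a y hy h hh := by
    rw [map_smul, ← smul_sub]
    exact F.smul_mem _ (hy h hh)

/-- The socle series with respect to `core`. -/
def layer : ℕ → Submodule (ZMod 5) Y
  | 0 => ⊥
  | n + 1 => B.fixedMod (layer n)

variable {B}

lemma comap_mkQ_I {F : Submodule (ZMod 5) Y} (hF : B.Stable F) :
    (quotient hF).I.comap F.mkQ = B.fixedMod F := by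
  ext y
  exact mkQ_mem_coreInvariants

lemma Stable.fixedMod {F : Submodule (ZMod 5) Y} (hF : B.Stable F) : B.Stable (B.fixedMod F) := by
  rw [← comap_mkQ_I hF]
  exact ⟨fun g y hy ↦ rep_mem_coreInvariants (τ := (quotient hF).τ) hy g,
    fun f y hy ↦ act_mem_I (B := quotient hF) hy f⟩

variable (B) in
lemma stable_layer (n : ℕ) : B.Stable (B.layer n) := by
  induction n with
  | zero => exact ⟨by simp [layer], by simp [layer]⟩
  | succ n ih => exact ih.fixedMod

variable (B) in
/-- The quotient by a term of the socle series. -/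
def layerQuotient (n : ℕ) : BlockRep (Y ⧸ B.layer n) := quotient (B.stable_layer n)

lemma mkQ_mem_I {n : ℕ} {y : Y} :
    (B.layer n).mkQ y ∈ (B.layerQuotient n).I ↔ y ∈ B.layer (n + 1) :=
  mkQ_mem_coreInvariants

lemma mkQ_mem_coreInvariantsTwo {n : ℕ} {y : Y} (hy : y ∈ B.layer (n + 2)) :
    (B.layer n).mkQ y ∈ coreInvariantsTwo (B.layerQuotient n).τ := by
  intro h hh
  have h' := mkQ_mem_I.2 (hy h hh)
  rwa [map_sub] at h'

lemma mkQ_mem_J {n : ℕ} {y : Y} :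
    (B.layer n).mkQ y ∈ (B.layerQuotient n).J ↔ ∀ i, B.τ (gen i) y - y ∈ B.layer n := by
  have key (g : FibGroup) : (B.layerQuotient n).τ g ((B.layer n).mkQ y) = (B.layer n).mkQ y ↔
      B.τ g y - y ∈ B.layer n := by
    rw [← Submodule.Quotient.mk_eq_zero, Submodule.Quotient.mk_sub, sub_eq_zero]
    rfl
  exact ⟨fun h i ↦ (key _).1 (h _), fun h ↦ mem_J_of_gen fun i ↦ (key _).2 (h i)⟩

variable (B) in
/-- The weighted sum of the relations. -/
def relSum : (ZMod 9 → Y) →ₗ[ZMod 5] Y :=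
  ∑ i, (1 + B.τ (gen (i + 1))) ∘ₗ LinearMap.proj i

lemma relSum_apply (m : ZMod 9 → Y) : B.relSum m = ∑ i, (m i + B.τ (gen (i + 1)) (m i)) := by
  simp [relSum]

lemma relSum_single (i : ZMod 9) (y : Y) :
    B.relSum (Pi.single i y) = y + B.τ (gen (i + 1)) y := by
  rw [relSum_apply, Finset.sum_eq_single i]
  · simp
  · intro j _ hj
    simp [hj]
  · simp

lemma relSum_relMap (m : ZMod 9 → Y) :
    (1 - B.τ invol) (B.relSum (relMap B.τ m)) = 0 := by
  have shift (f : ZMod 9 → Y) (j : ZMod 9) : ∑ i, f (i + j) = ∑ i, f i :=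
    Equiv.sum_comp (Equiv.addRight j) f
  have h : B.relSum (relMap B.τ m) = ∑ i, (B.τ (gen (i + 3)) (m (i + 2)) +
      B.τ invol (B.τ (gen (i + 3)) (m (i + 2)))) := by
    have e₁ := shift (fun i ↦ m i + B.τ (gen (i + 1)) (m i)) 2
    have e₂ := shift (fun i ↦ B.τ (gen i) (m (i + 1)) +
      B.τ (gen (i + 1)) (B.τ (gen i) (m (i + 1)))) 1
    rw [relSum_apply]
    simp only [relMap_apply, map_add, map_sub]
    have e₃ : ∑ i, (m i + B.τ (gen i) (m (i + 1)) - m (i + 2) +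
        (B.τ (gen (i + 1)) (m i) + B.τ (gen (i + 1)) (B.τ (gen i) (m (i + 1))) -
          B.τ (gen (i + 1)) (m (i + 2)))) = ∑ i, (m i + B.τ (gen (i + 1)) (m i)) +
        ∑ i, (B.τ (gen i) (m (i + 1)) + B.τ (gen (i + 1)) (B.τ (gen i) (m (i + 1)))) -
        ∑ i, (m (i + 2) + B.τ (gen (i + 1)) (m (i + 2))) := by
      rw [← Finset.sum_add_distrib, ← Finset.sum_sub_distrib]
      exact Finset.sum_congr rfl fun i _ ↦ by abel
    rw [e₃, ← e₁, ← e₂, ← Finset.sum_add_distrib, ← Finset.sum_sub_distrib]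
    refine Finset.sum_congr rfl fun i _ ↦ ?_
    rw [← rep_mul_apply B.τ (gen (i + 1 + 1)), gen_succ_mul, rep_mul_apply, add_assoc i 1 1,
      add_assoc i 1 2, add_assoc i 2 1, show (1 : ZMod 9) + 1 = 2 by decide,
      show (1 : ZMod 9) + 2 = 3 by decide, show (2 : ZMod 9) + 1 = 3 by decide]
    abel
  rw [h, map_sum]
  refine Finset.sum_eq_zero fun i _ ↦ ?_
  rw [LinearMap.sub_apply, Module.End.one_apply, map_add, rep_invol_rep_invol]
  abel

lemma odd_le_map_relSum {F : Submodule (ZMod 5) Y} (hF : ∀ g, ∀ y ∈ F, B.τ g y ∈ F) :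
    B.odd F ≤ F.powNine.map ((1 - B.τ invol) ∘ₗ B.relSum) := by
  rw [Submodule.map_comp, ← map_one_sub_eq_odd (hF invol)]
  refine Submodule.map_mono fun y hy ↦ ?_
  have hsingle (i : ZMod 9) {x : Y} (hx : x ∈ F) : Pi.single i x ∈ F.powNine :=
    Submodule.mem_powNine.2 fun j ↦ by
      by_cases h : j = i
      · subst h
        simpa using hx
      · simp [h]
  refine ⟨(3 : ZMod 5) • (Pi.single 0 y + Pi.single 1 y - Pi.single 8 (B.τ (gen 1) y)),
    Submodule.smul_mem _ _ (sub_mem (add_mem (hsingle 0 hy) (hsingle 1 hy))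
      (hsingle 8 (hF _ _ hy))), ?_⟩
  have h : B.τ (gen (8 + 1)) (B.τ (gen 1) y) = B.τ (gen (1 + 1)) y := by
    rw [← rep_mul_apply]
    congr 2
  rw [map_smul, map_sub, map_add, relSum_single, relSum_single, relSum_single, h, zero_add]
  refine Eq.trans ?_ (three_smul_add_self y)
  congr 1
  abel

lemma map_mkQ_relMap_mem {n : ℕ} {m : ZMod 9 → Y} (hm : m ∈ (B.layer (n + 1)).powNine) :
    (B.layer n).mkQ.compLeft (ZMod 9) (relMap B.τ m) ∈
      (B.layerQuotient n).I.powNine.map (relMap (B.layerQuotient n).τ) :=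
  ⟨(B.layer n).mkQ.compLeft (ZMod 9) m,
    Submodule.mem_powNine.2 fun i ↦ mkQ_mem_I.2 (Submodule.mem_powNine.1 hm i), rfl⟩

section Finrank

variable [Module.Finite (ZMod 5) Y]

lemma finrank_layer_succ (n : ℕ) : finrank (ZMod 5) (B.layer (n + 1)) =
    finrank (ZMod 5) (B.layerQuotient n).I + finrank (ZMod 5) (B.layer n) := by
  rw [← Submodule.finrank_comap_mkQ, layerQuotient, comap_mkQ_I, layer]

lemma two_mul_finrank_inf_ker_le {F : Submodule (ZMod 5) Y} (hF : B.Stable F) :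
    2 * finrank (ZMod 5) (F.powNine ⊓ LinearMap.ker ((1 - B.τ invol) ∘ₗ B.relSum) :
      Submodule (ZMod 5) (ZMod 9 → Y)) ≤ 17 * finrank (ZMod 5) F := by
  have h₁ := Submodule.finrank_map_add_finrank_inf_ker F.powNine ((1 - B.τ invol) ∘ₗ B.relSum)
  rw [Submodule.finrank_powNine] at h₁
  have h₂ := Submodule.finrank_mono (odd_le_map_relSum hF.τ_mem)
  have h₃ := two_mul_finrank_odd (hF.τ_mem invol) hF.act_mem
  omega

lemma finrank_map_relMap_layer_succ_le [Finite FibGroup] (n : ℕ) :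
    finrank (ZMod 5) ((B.layer (n + 1)).powNine.map (relMap B.τ)) +
      17 * finrank (ZMod 5) (B.layerQuotient n).J ≤ 8 * finrank (ZMod 5) (B.layerQuotient n).I +
        finrank (ZMod 5) ((B.layer (n + 1)).powNine.map (relMap B.τ) ⊓ (B.layer n).powNine :
          Submodule (ZMod 5) (ZMod 9 → Y)) := by
  have h₁ := Submodule.finrank_le_finrank_map_add
    (P := (B.layer (n + 1)).powNine.map (relMap B.τ))
    (N := (B.layer (n + 1)).powNine.map (relMap B.τ) ⊓ (B.layer n).powNine)
    ((B.layer n).mkQ.compLeft (ZMod 9)) (inf_le_inf_left _ fun m hm ↦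
      Submodule.mem_powNine.2 fun i ↦ (Submodule.Quotient.mk_eq_zero _).1 (congrFun hm i))
  have h₂ : finrank (ZMod 5) (((B.layer (n + 1)).powNine.map (relMap B.τ)).map
      ((B.layer n).mkQ.compLeft (ZMod 9))) ≤
      finrank (ZMod 5) ((B.layerQuotient n).I.powNine.map (relMap (B.layerQuotient n).τ)) := by
    refine Submodule.finrank_mono ?_
    rintro _ ⟨_, ⟨m, hm, rfl⟩, rfl⟩
    exact map_mkQ_relMap_mem hm
  have h₃ := finrank_map_relMap_I_le (B := B.layerQuotient n)
  omega

lemma two_mul_finrank_map_relMap_inf_le [Finite FibGroup] (n : ℕ) :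
    2 * finrank (ZMod 5) ((B.layer (n + 2)).powNine.map (relMap B.τ) ⊓ (B.layer (n + 1)).powNine :
      Submodule (ZMod 5) (ZMod 9 → Y)) + 36 * finrank (ZMod 5) (B.layerQuotient n).J ≤
        17 * finrank (ZMod 5) (B.layer (n + 1)) := by
  set Q := B.layerQuotient n
  set Z := (B.layer (n + 2)).powNine.map (relMap B.τ) ⊓ (B.layer (n + 1)).powNine
  have h₁ := Submodule.finrank_le_finrank_map_add (P := Z)
    (N := (B.layer n).powNine ⊓ LinearMap.ker ((1 - B.τ invol) ∘ₗ B.relSum))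
    ((B.layer n).mkQ.compLeft (ZMod 9)) (by
      rintro _ ⟨⟨⟨m, -, rfl⟩, -⟩, hm⟩
      exact ⟨Submodule.mem_powNine.2 fun i ↦
        (Submodule.Quotient.mk_eq_zero _).1 (congrFun hm i), relSum_relMap m⟩)
  have h₂ : finrank (ZMod 5) (Z.map ((B.layer n).mkQ.compLeft (ZMod 9))) ≤
      finrank (ZMod 5) (Q.I.powNine ⊓ ((Q.odd Q.I).powNine.map (relMap Q.τ)).comap
        ((1 - Q.τ invol).compLeft (ZMod 9)) : Submodule (ZMod 5) (ZMod 9 → Y ⧸ B.layer n)) := by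
    refine Submodule.finrank_mono ?_
    rintro _ ⟨_, ⟨⟨m, hm, rfl⟩, hm'⟩, rfl⟩
    have hI (i : ZMod 9) : (B.layer n).mkQ (relMap B.τ m i) ∈ Q.I :=
      mkQ_mem_I.2 (Submodule.mem_powNine.1 hm' i)
    obtain ⟨p, hp, hpm⟩ := exists_relMap_eq_sub (τ := Q.τ)
      (m := fun i ↦ (B.layer n).mkQ (m i))
      (fun i ↦ mkQ_mem_coreInvariantsTwo (Submodule.mem_powNine.1 hm i)) hI
    exact ⟨Submodule.mem_powNine.2 hI,
      p, Submodule.mem_powNine.2 fun i ↦ mem_odd.2 (hp i), funext hpm⟩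
  have h₃ := two_mul_finrank_comap_le (B := Q)
  have h₄ := two_mul_finrank_inf_ker_le (B.stable_layer n)
  have h₅ : finrank (ZMod 5) (B.layer (n + 1)) =
      finrank (ZMod 5) Q.I + finrank (ZMod 5) (B.layer n) := finrank_layer_succ n
  omega

/-- A lower bound for the invariants of the quotients by the terms of the socle series. -/
lemma le_finrank_J_add
    (hexact : ∀ m, relMap B.τ m = 0 → ∃ p, ∀ i, m i = B.τ (gen i) p - p) (hJ : B.J ≠ ⊥) (n : ℕ) :
    1 + 8 * finrank (ZMod 5) (B.layer n) ≤ finrank (ZMod 5) (B.layerQuotient n).J +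
      finrank (ZMod 5) ((B.layer n).powNine.map (relMap B.τ)) := by
  let D : Y →ₗ[ZMod 5] (ZMod 9 → Y) := LinearMap.pi fun i ↦ B.τ (gen i) - 1
  have hD (p : Y) (i : ZMod 9) : D p i = B.τ (gen i) p - p := rfl
  set N := (B.layerQuotient n).J.comap (B.layer n).mkQ
  have h₁ : finrank (ZMod 5) N = finrank (ZMod 5) (B.layerQuotient n).J +
      finrank (ZMod 5) (B.layer n) := Submodule.finrank_comap_mkQ _ _
  have h₂ := Submodule.finrank_map_add_finrank_inf_ker N D
  have h₃ := Submodule.finrank_map_add_finrank_inf_ker (B.layer n).powNine (relMap B.τ)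
  rw [Submodule.finrank_powNine] at h₃
  have h₄ : finrank (ZMod 5) ((B.layer n).powNine ⊓ LinearMap.ker (relMap B.τ) :
      Submodule (ZMod 5) (ZMod 9 → Y)) ≤ finrank (ZMod 5) (N.map D) := by
    refine Submodule.finrank_mono ?_
    rintro m ⟨hm, hm'⟩
    obtain ⟨p, hp⟩ := hexact m hm'
    refine ⟨p, mkQ_mem_J.2 fun i ↦ ?_, funext fun i ↦ (hp i).symm⟩
    rw [← hp]
    exact Submodule.mem_powNine.1 hm i
  have h₅ : finrank (ZMod 5) B.J ≤
      finrank (ZMod 5) (N ⊓ LinearMap.ker D : Submodule (ZMod 5) Y) := by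
    refine Submodule.finrank_mono fun y hy ↦ ⟨mkQ_mem_J.2 fun i ↦ ?_, funext fun i ↦ ?_⟩
    · rw [hy, sub_self]
      exact zero_mem _
    · rw [hD, hy, sub_self, Pi.zero_apply]
  have h₆ := Submodule.one_le_finrank_iff.2 hJ
  omega

end Finrank

end BlockRep

/-- The growth of the dimensions forced by the recursive inequalities. -/
lemma exists_lt_of_recursion {U L d : ℕ → ℕ} (hd0 : d 0 = 0) (hd : ∀ n, d (n + 1) = L n + d n)
    (hUL : ∀ n, U n ≤ L n) (hLU : ∀ n, L n ≤ 152 * U n) (h1 : 1 + 17 * U 0 ≤ U 1)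
    (hrec : ∀ n, 2 + 34 * U (n + 1) + 36 * U n ≤ 2 * U (n + 2) + d (n + 1)) (N : ℕ) :
    ∃ n, N < d n := by
  set c : ℕ → ℕ := fun n ↦ ∑ j ∈ Finset.range n, U j with hc
  have hc0 : c 0 = 0 := rfl
  have hcs (n : ℕ) : c (n + 1) = c n + U n := Finset.sum_range_succ _ _
  have hcd (n : ℕ) : c n ≤ d n ∧ d n ≤ 152 * c n := by
    induction n with
    | zero => omega
    | succ n ih =>
      have := hd n
      have := hcs n
      have := hUL n
      have := hLU n
      omega
  have hU (n : ℕ) : 8 * c n ≤ U n ∧ 8 * c (n + 1) ≤ U (n + 1) := by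
    induction n with
    | zero =>
      have : c 1 = c 0 + U 0 := hcs 0
      refine ⟨?_, ?_⟩
      · omega
      · change 8 * c 1 ≤ U 1
        omega
    | succ n ih =>
      have := hcs n
      have : c (n + 2) = c (n + 1) + U (n + 1) := hcs (n + 1)
      have := hrec n
      have := hcd (n + 1)
      refine ⟨ih.2, ?_⟩
      change 8 * c (n + 2) ≤ U (n + 2)
      omega
  have hgrow (n : ℕ) : n < c (n + 2) := by
    induction n with
    | zero =>
      have : c 2 = c 1 + U 1 := hcs 1
      change 0 < c 2
      omega
    | succ n ih =>
      have : c (n + 3) = c (n + 2) + U (n + 2) := hcs (n + 2)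
      have := (hU (n + 2)).1
      change n + 1 < c (n + 3)
      omega
  exact ⟨N + 2, (hgrow N).trans_le (hcd _).1⟩

namespace FibGroup

/-- The regular representation, on functions. -/
noncomputable def regular : BlockRep (FibGroup → ZMod 5) where
  τ :=
    { toFun g := LinearMap.funLeft (ZMod 5) (ZMod 5) fun x ↦ x * g
      map_one' := by
        ext m x
        simp [LinearMap.funLeft]
      map_mul' g h := by
        ext m x
        simp [LinearMap.funLeft, mul_assoc] }
  act :=
    { toFun f := LinearMap.mulLeft (ZMod 5) fun x : FibGroup ↦ f (x : FibGroup ⧸ core)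
      map_one' := by
        ext
        simp
      map_mul' f f' := by
        ext
        simp [mul_assoc]
      map_zero' := by
        ext
        simp
      map_add' f f' := by
        ext
        simp [add_mul]
      commutes' r := by
        ext
        simp [Algebra.algebraMap_eq_smul_one] }
  τ_act g f m := rfl

lemma regular_τ_apply (g : FibGroup) (m : FibGroup → ZMod 5) (x : FibGroup) :
    regular.τ g m x = m (x * g) := rfl

lemma regular_exact (m : ZMod 9 → FibGroup → ZMod 5) (hm : relMap regular.τ m = 0) :
    ∃ p, ∀ i, m i = regular.τ (gen i) p - p := by
  obtain ⟨f, hf, hfm⟩ := exists_isCocycle (τ := regular.τ) (m := m)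
    fun i ↦ sub_eq_zero.1 (congrFun hm i)
  refine ⟨fun x ↦ f x 1, fun i ↦ ?_⟩
  ext x
  rw [← hfm, Pi.sub_apply, regular_τ_apply, hf, Pi.add_apply, add_sub_cancel_left,
    regular_τ_apply, one_mul]

lemma regular_J_ne_bot : regular.J ≠ ⊥ := by
  refine (Submodule.ne_bot_iff _).2 ⟨fun _ ↦ 1, fun g ↦ rfl, fun h ↦ ?_⟩
  exact one_ne_zero (congrFun h 1)

lemma infinite : Infinite FibGroup := by
  refine not_finite_iff_infinite.1 fun _ ↦ ?_
  have hlower := BlockRep.le_finrank_J_add regular_exact regular_J_ne_bot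
  have hsucc := BlockRep.finrank_layer_succ (B := regular)
  have h0 : finrank (ZMod 5) (regular.layer 0) = 0 := finrank_bot _ _
  obtain ⟨n, hn⟩ := exists_lt_of_recursion
    (U := fun n ↦ finrank (ZMod 5) (regular.layerQuotient n).J)
    (L := fun n ↦ finrank (ZMod 5) (regular.layerQuotient n).I)
    (d := fun n ↦ finrank (ZMod 5) (regular.layer n)) h0 hsucc
    (fun n ↦ Submodule.finrank_mono (regular.layerQuotient n).J_le_I)
    (fun n ↦ BlockRep.finrank_I_le)
    (by
      have h₁ := BlockRep.finrank_map_relMap_layer_succ_le (B := regular) 0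
      have h₂ : (regular.layer 0).powNine = ⊥ :=
        (Submodule.eq_bot_iff _).2 fun m hm ↦ funext fun i ↦ Submodule.mem_powNine.1 hm i
      rw [h₂, inf_bot_eq, finrank_bot] at h₁
      have h₃ := hlower 1
      have h₄ := hsucc 0
      rw [zero_add] at h₁ h₄
      omega)
    (fun n ↦ by
      have h₁ := BlockRep.finrank_map_relMap_layer_succ_le (B := regular) (n + 1)
      have h₂ := BlockRep.two_mul_finrank_map_relMap_inf_le (B := regular) n
      have h₃ := hlower (n + 2)
      have h₄ := hsucc (n + 1)
      rw [show n + 1 + 1 = n + 2 from rfl] at h₁ h₄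
      omega)
    (finrank (ZMod 5) (FibGroup → ZMod 5))
  exact hn.not_ge (Submodule.finrank_le _)

end FibGroup

theorem fib_two_nine_infinite : Infinite (PresentedGroup fibTwoRels) := by
  exact FibGroup.infinite
end
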